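/- Suppose g(r) = o(r^{-c}) as r → ∞ for some c > 3d, and fix γ > (c − 3d)/(c − d). Let δ_n denote the minimum vertex degree of G_n(r̂_n(γ)). Then almost surely, limsup_{n→∞} δ_n/(log n) ≤ γ·H₋⁻¹((c − 3d)/(γ(c − d))). -/

import Mathlib

open MeasureTheory ProbabilityTheory Filter Set

noncomputable section

namespace RCM

/-- The toroidal metric on the unit cube. -/
def torusDist {d : ℕ} (x y : EuclideanSpace ℝ (Fin d)) : ℝ :=
  ⨅ z : Fin d → ℤ, ‖x - y - (WithLp.equiv 2 (Fin d → ℝ)).symm (fun i => (z i : ℝ))‖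

/-- The half-open unit cube `S = (-1/2, 1/2]^d`. -/
def cube (d : ℕ) : Set (EuclideanSpace ℝ (Fin d)) :=
  {x | ∀ i, x i ∈ Set.Ioc (-(1/2) : ℝ) (1/2)}

/-- The random connection model: i.i.d. uniform points `X`, coupled Poisson counts `N`,
i.i.d. uniform edge variables `U`, with the three families mutually independent, and a
non-increasing connection function `g : [0,∞) → [0,1]` with finite positive integral `α`. -/
structure Model (d : ℕ) {Ω : Type*} [MeasurableSpace Ω] (P : Measure Ω) where
  g : ℝ → ℝ
  α : ℝ
  X : ℕ → Ω → EuclideanSpace ℝ (Fin d)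
  N : ℕ → Ω → ℕ
  U : ℕ → ℕ → Ω → ℝ
  g_antitone : AntitoneOn g (Set.Ici 0)
  g_mem : ∀ r : ℝ, 0 ≤ r → g r ∈ Set.Icc (0 : ℝ) 1
  g_integrable : MeasureTheory.Integrable (fun x : EuclideanSpace ℝ (Fin d) => g ‖x‖)
  α_def : α = ∫ x : EuclideanSpace ℝ (Fin d), g ‖x‖
  α_pos : 0 < α
  X_meas : ∀ i, Measurable (X i)
  X_unif : ∀ i : ℕ, 1 ≤ i → Measure.map (X i) P = volume.restrict (cube d)
  X_indep : iIndepFun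
    (fun i : {i : ℕ // 1 ≤ i} => X i) P
  N_meas : ∀ n, Measurable (N n)
  N_mono : ∀ ω, Monotone fun n => N n ω
  N_poisson : ∀ n k : ℕ,
    P {ω | N n ω = k} = ENNReal.ofReal (Real.exp (-(n : ℝ)) * (n : ℝ) ^ k / k.factorial)
  U_meas : ∀ i j, Measurable (U i j)
  U_unif : ∀ i j : ℕ, 1 ≤ i → i < j →
    Measure.map (U i j) P = volume.restrict (Set.Icc (0 : ℝ) 1)
  U_indep : iIndepFun
    (fun p : {p : ℕ × ℕ // 1 ≤ p.1 ∧ p.1 < p.2} => U p.1.1 p.1.2) P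
  families_indep : iIndep
    (![MeasurableSpace.comap (fun ω => fun i : ℕ => X i ω) inferInstance,
       MeasurableSpace.comap (fun ω => fun n : ℕ => N n ω) inferInstance,
       MeasurableSpace.comap (fun ω => fun p : ℕ × ℕ => U p.1 p.2 ω) inferInstance]) P

variable {d : ℕ} {Ω : Type*} [MeasurableSpace Ω] {P : Measure Ω}

/-- Adjacency in the graph `G_n(r)`: vertices `1 ≤ i,j ≤ N_n` are joined iff
`U_{ij} ≤ g(dist(X_i,X_j)/r)`. -/
def adj (M : Model d P) (n : ℕ) (r : ℝ) (ω : Ω) (i j : ℕ) : Prop :=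
  i ≠ j ∧ 1 ≤ i ∧ 1 ≤ j ∧ i ≤ M.N n ω ∧ j ≤ M.N n ω ∧
    M.U (min i j) (max i j) ω ≤ M.g (torusDist (M.X i ω) (M.X j ω) / r)

/-- The degree of vertex `i` in `G_n(r)`. -/
def deg (M : Model d P) (n : ℕ) (r : ℝ) (ω : Ω) (i : ℕ) : ℕ :=
  {j : ℕ | adj M n r ω i j}.ncard

/-- `W_n(r)`, the number of isolated vertices of `G_n(r)`. -/
def isolatedCount (M : Model d P) (n : ℕ) (r : ℝ) (ω : Ω) : ℕ :=
  {i : ℕ | 1 ≤ i ∧ i ≤ M.N n ω ∧ deg M n r ω i = 0}.ncard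


/-- `r̂_n(γ)` defined by `r̂_n(γ)^d = γ log n / (α n)`. -/
def rhat (M : Model d P) (γ : ℝ) (n : ℕ) : ℝ :=
  (γ * Real.log n / (M.α * n)) ^ ((1 : ℝ) / d)

/-- `d_n`, the critical parameter for absence of isolated nodes. -/
def critRadius (M : Model d P) (n : ℕ) (ω : Ω) : ℝ :=
  sInf {r : ℝ | 0 < r ∧ isolatedCount M n r ω = 0}

/-- The maximum vertex degree `Δ_n` of `G_n(r)`. -/
def maxDeg (M : Model d P) (n : ℕ) (r : ℝ) (ω : Ω) : ℕ :=
  (Finset.Icc 1 (M.N n ω)).sup (deg M n r ω)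

/-- The minimum vertex degree `δ_n` of `G_n(r)`. -/
def minDeg (M : Model d P) (n : ℕ) (r : ℝ) (ω : Ω) : ℕ :=
  sInf {k : ℕ | ∃ i, 1 ≤ i ∧ i ≤ M.N n ω ∧ deg M n r ω i = k}

/-- The length (toroidal metric) of the longest edge of `G_n(r)` (`0` if there are no edges). -/
def longestEdge (M : Model d P) (n : ℕ) (r : ℝ) (ω : Ω) : ℝ :=
  sSup ({0} ∪ {t : ℝ | ∃ i j, adj M n r ω i j ∧ t = torusDist (M.X i ω) (M.X j ω)})

/-- Connectivity of `G_n(r)`: any two vertices are joined by a path. -/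
def connectedGraph (M : Model d P) (n : ℕ) (r : ℝ) (ω : Ω) : Prop :=
  ∀ i j : ℕ, 1 ≤ i → i ≤ M.N n ω → 1 ≤ j → j ≤ M.N n ω →
    Relation.ReflTransGen (adj M n r ω) i j

/-- `H(x) = 1 - x + x log x` (with `H(0) = 1`, since `log 0 = 0` in Lean). -/
def H (x : ℝ) : ℝ := 1 - x + x * Real.log x

/-- The inverse of the restriction of `H` to `[1, ∞)`. -/
def Hplusinv (y : ℝ) : ℝ := sInf {x : ℝ | 1 ≤ x ∧ y ≤ H x}

/-- The inverse of the restriction of `H` to `[0, 1]`. -/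
def Hminusinv (y : ℝ) : ℝ := sInf {x : ℝ | 0 ≤ x ∧ H x ≤ y}

/-- The standard normal distribution function. -/
def stdNormalCDF (x : ℝ) : ℝ :=
  ∫ t in Set.Iic x, Real.exp (-t ^ 2 / 2) / Real.sqrt (2 * Real.pi)

section Counting

variable {ι Ω F : Type*}

open Classical in
/-- The number of indices `k ∈ T` whose mark `v k` lies in `A`. -/
def markCount (T : Finset ι) (A : Set F) (v : ι → F) : ℕ := (T.filter fun k => v k ∈ A).card

lemma markCount_empty (A : Set F) (v : ι → F) : markCount (∅ : Finset ι) A v = 0 := by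
  simp [markCount]

lemma markCount_mono {T T' : Finset ι} {A B : Set F} {v : ι → F} (hT : T ⊆ T') (hA : A ⊆ B) :
    markCount T A v ≤ markCount T' B v := by
  classical
  unfold markCount
  apply Finset.card_le_card
  intro k hk
  simp only [Finset.mem_filter] at hk ⊢
  exact ⟨hT hk.1, hA hk.2⟩

lemma markCount_insert_lt [DecidableEq ι] {T : Finset ι} {k : ι} (hk : k ∉ T) (A : Set F)
    (v : ι → F) (s : ℕ) :
    markCount (insert k T) A v < s ↔
      (markCount T A v < s ∧ v k ∉ A) ∨ (markCount T A v < s - 1 ∧ v k ∈ A) := by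
  classical
  unfold markCount
  rw [Finset.filter_insert]
  by_cases h : v k ∈ A
  · rw [if_pos h, Finset.card_insert_of_notMem (by simp [hk])]
    simp only [h, not_true, and_false, and_true, false_or]
    omega
  · simp [h]

lemma markCount_univ_subtype (T : Finset ι) (A : Set F) (v : ι → F) :
    markCount (Finset.univ : Finset T) A (fun l => v l) = markCount T A v := by
  classical
  unfold markCount
  rw [Finset.card_filter, Finset.card_filter, ← Finset.sum_coe_sort T]

variable [MeasurableSpace Ω] {P : Measure Ω} [MeasurableSpace F]

lemma measurable_markCount (T : Finset ι) {A : Set F} (hA : MeasurableSet A) :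
    Measurable (fun v : ι → F => markCount T A v) := by
  classical
  have : (fun v : ι → F => markCount T A v)
      = fun v => ∑ k ∈ T, (A.indicator (fun _ => (1 : ℕ)) (v k)) := by
    ext v
    rw [markCount, Finset.card_filter]
    rfl
  rw [this]
  refine Finset.measurable_sum _ fun k _ => ?_
  exact (measurable_const.indicator hA).comp (measurable_pi_apply k)

/-- Marks `ξ k`, `k ∈ T`, such that each is independent of any finite set of the others. -/
def IndepMarks (P : Measure Ω) (T : Finset ι) (ξ : ι → Ω → F) : Prop :=
  ∀ s : Finset ι, s ⊆ T → ∀ k ∈ T, k ∉ s → IndepFun (fun ω (l : s) => ξ l ω) (ξ k) P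

lemma measurable_markCount_subtype (T : Finset ι) {A : Set F} (hA : MeasurableSet A) :
    Measurable (fun v : T → F => markCount Finset.univ A v) :=
  measurable_markCount _ hA

lemma IndepMarks.measure_inter {T : Finset ι} {ξ : ι → Ω → F}
    (h : IndepMarks P T ξ) {s : Finset ι} (hs : s ⊆ T) {k : ι} (hkT : k ∈ T) (hk : k ∉ s)
    {A B : Set F} (hA : MeasurableSet A) (hB : MeasurableSet B)
    (Q : ℕ → ℕ → Prop) {C : Set F} (hC : MeasurableSet C) :
    P.real {ω | Q (markCount s A (fun l => ξ l ω)) (markCount s B (fun l => ξ l ω)) ∧ ξ k ω ∈ C}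
      = P.real {ω | Q (markCount s A (fun l => ξ l ω)) (markCount s B (fun l => ξ l ω))}
        * P.real {ω | ξ k ω ∈ C} := by
  have hi := h s hs k hkT hk
  have hm : MeasurableSet {v : s → F |
      Q (markCount Finset.univ A v) (markCount Finset.univ B v)} := by
    have := (measurable_markCount_subtype s hA).prodMk (measurable_markCount_subtype s hB)
    exact this (MeasurableSet.of_discrete (s := {p : ℕ × ℕ | Q p.1 p.2}))
  have := hi.measure_inter_preimage_eq_mul _ _ hm hC
  simp only [measureReal_def, ← ENNReal.toReal_mul]
  congr 1
  convert this using 2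
  · ext ω
    simp [← markCount_univ_subtype s A, ← markCount_univ_subtype s B]
  · congr 1
    ext ω
    simp [← markCount_univ_subtype s A, ← markCount_univ_subtype s B]
  · rfl

variable [IsProbabilityMeasure P]

lemma measurableSet_markCount (T : Finset ι) {ξ : ι → Ω → F} (hξ : ∀ k, Measurable (ξ k))
    {A B : Set F} (hA : MeasurableSet A) (hB : MeasurableSet B) (Q : ℕ → ℕ → Prop) :
    MeasurableSet {ω | Q (markCount T A (fun l => ξ l ω)) (markCount T B (fun l => ξ l ω))} := by
  have h1 : Measurable fun ω => fun l => ξ l ω := measurable_pi_lambda _ hξ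
  have := ((measurable_markCount T hA).comp h1).prodMk ((measurable_markCount T hB).comp h1)
  exact this (MeasurableSet.of_discrete (s := {p : ℕ × ℕ | Q p.1 p.2}))

lemma IndepMarks.real_insert_lt [DecidableEq ι] {T : Finset ι} {ξ : ι → Ω → F}
    (h : IndepMarks P T ξ) (hξ : ∀ k, Measurable (ξ k)) {s : Finset ι} (hs : s ⊆ T) {k : ι}
    (hkT : k ∈ T) (hk : k ∉ s) {A : Set F} (hA : MeasurableSet A) (t : ℕ) :
    P.real {ω | markCount (insert k s) A (fun l => ξ l ω) < t}
      = P.real {ω | markCount s A (fun l => ξ l ω) < t} * (1 - P.real {ω | ξ k ω ∈ A})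
        + P.real {ω | markCount s A (fun l => ξ l ω) < t - 1} * P.real {ω | ξ k ω ∈ A} := by
  have e1 := h.measure_inter hs hkT hk hA hA (fun m _ => m < t) hA.compl
  have e2 := h.measure_inter hs hkT hk hA hA (fun m _ => m < t - 1) hA
  have e3 : P.real {ω | ξ k ω ∈ Aᶜ} = 1 - P.real {ω | ξ k ω ∈ A} := by
    exact probReal_compl_eq_one_sub (hξ k hA)
  rw [← e2, ← e3, ← e1, ← measureReal_union]
  · congr 1
    ext ω
    simp only [Set.mem_ofPred_eq, markCount_insert_lt hk, Set.mem_union, Set.mem_compl_iff]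
  · rw [Set.disjoint_left]
    rintro ω ⟨_, h1⟩ ⟨_, h2⟩
    exact h1 h2
  · exact (measurableSet_markCount s hξ hA hA (fun m _ => m < t - 1)).inter (hξ k hA)

/-- Counts of marks in two disjoint sets are negatively correlated. -/
lemma IndepMarks.real_lt_and_lt_le {T : Finset ι} {ξ : ι → Ω → F}
    (h : IndepMarks P T ξ) (hξ : ∀ k, Measurable (ξ k)) {A B : Set F} (hA : MeasurableSet A)
    (hB : MeasurableSet B) (hAB : Disjoint A B) (a b : ℕ) :
    P.real {ω | markCount T A (fun l => ξ l ω) < a ∧ markCount T B (fun l => ξ l ω) < b}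
      ≤ P.real {ω | markCount T A (fun l => ξ l ω) < a}
        * P.real {ω | markCount T B (fun l => ξ l ω) < b} := by
  classical
  suffices H : ∀ s : Finset ι, s ⊆ T → ∀ a b : ℕ,
      P.real {ω | markCount s A (fun l => ξ l ω) < a ∧ markCount s B (fun l => ξ l ω) < b}
      ≤ P.real {ω | markCount s A (fun l => ξ l ω) < a}
        * P.real {ω | markCount s B (fun l => ξ l ω) < b} from H T subset_rfl a b
  intro s
  induction s using Finset.induction_on with
  | empty =>
    intro _ a b
    simp only [markCount_empty]
    by_cases ha : 0 < a <;> by_cases hb : 0 < b <;> simp [ha, hb]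
  | insert k s hk ih =>
    intro hsT a b
    have hs : s ⊆ T := fun x hx => hsT (Finset.mem_insert_of_mem hx)
    have hkT : k ∈ T := hsT (Finset.mem_insert_self _ _)
    rw [h.real_insert_lt hξ hs hkT hk hA, h.real_insert_lt hξ hs hkT hk hB]
    have e1 := h.measure_inter hs hkT hk hA hB (fun m n => m < a ∧ n < b) (hA.union hB).compl
    have e2 := h.measure_inter hs hkT hk hA hB (fun m n => m < a - 1 ∧ n < b) hA
    have e3 := h.measure_inter hs hkT hk hA hB (fun m n => m < a ∧ n < b - 1) hB
    have e4 : P.real {ω | ξ k ω ∈ (A ∪ B)ᶜ}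
        = 1 - (P.real {ω | ξ k ω ∈ A} + P.real {ω | ξ k ω ∈ B}) := by
      have hd : Disjoint {ω | ξ k ω ∈ A} {ω | ξ k ω ∈ B} := hAB.preimage (ξ k)
      rw [← measureReal_union hd (hξ k hB)]
      exact probReal_compl_eq_one_sub ((hξ k hA).union (hξ k hB))
    have hsub : P.real {ω | markCount (insert k s) A (fun l => ξ l ω) < a ∧
          markCount (insert k s) B (fun l => ξ l ω) < b} ≤
        P.real {ω | (markCount s A (fun l => ξ l ω) < a ∧ markCount s B (fun l => ξ l ω) < b)
          ∧ ξ k ω ∈ (A ∪ B)ᶜ}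
        + P.real {ω | (markCount s A (fun l => ξ l ω) < a - 1 ∧
          markCount s B (fun l => ξ l ω) < b) ∧ ξ k ω ∈ A}
        + P.real {ω | (markCount s A (fun l => ξ l ω) < a ∧
          markCount s B (fun l => ξ l ω) < b - 1) ∧ ξ k ω ∈ B} := by
      refine le_trans (measureReal_mono ?_) ((measureReal_union_le _ _).trans
        (add_le_add_left (measureReal_union_le _ _) _))
      intro ω
      have hno : ξ k ω ∈ A → ξ k ω ∉ B := fun h1 h2 => Set.disjoint_left.1 hAB h1 h2
      simp only [Set.mem_ofPred_eq, markCount_insert_lt hk, Set.mem_union, Set.mem_compl_iff]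
      tauto
    refine hsub.trans ?_
    rw [e1, e2, e3, e4]
    have i1 := ih hs a b
    have i2 := ih hs (a - 1) b
    have i3 := ih hs a (b - 1)
    have mA : P.real {ω | markCount s A (fun l => ξ l ω) < a - 1} ≤
        P.real {ω | markCount s A (fun l => ξ l ω) < a} :=
      measureReal_mono (by intro ω hω; simp only [Set.mem_ofPred_eq] at hω ⊢; omega)
    have mB : P.real {ω | markCount s B (fun l => ξ l ω) < b - 1} ≤
        P.real {ω | markCount s B (fun l => ξ l ω) < b} :=
      measureReal_mono (by intro ω hω; simp only [Set.mem_ofPred_eq] at hω ⊢; omega)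
    set p := P.real {ω | ξ k ω ∈ A}
    set q := P.real {ω | ξ k ω ∈ B}
    have hp : 0 ≤ p := measureReal_nonneg
    have hq : 0 ≤ q := measureReal_nonneg
    have hpq : 0 ≤ 1 - (p + q) := by rw [← e4]; exact measureReal_nonneg
    set x := P.real {ω | markCount s A (fun l => ξ l ω) < a}
    set x' := P.real {ω | markCount s A (fun l => ξ l ω) < a - 1}
    set y := P.real {ω | markCount s B (fun l => ξ l ω) < b}
    set y' := P.real {ω | markCount s B (fun l => ξ l ω) < b - 1}
    have := mul_le_mul_of_nonneg_right i1 hpq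
    have := mul_le_mul_of_nonneg_right i2 hp
    have := mul_le_mul_of_nonneg_right i3 hq
    have := mul_nonneg (mul_nonneg hp hq) (mul_nonneg (sub_nonneg.2 mA) (sub_nonneg.2 mB))
    nlinarith

/-- A single binomial weight bounds the lower tail of a count from below. -/
lemma IndepMarks.choose_mul_le_real_lt {T : Finset ι} {ξ : ι → Ω → F}
    (h : IndepMarks P T ξ) (hξ : ∀ k, Measurable (ξ k)) {A : Set F} (hA : MeasurableSet A)
    {a : ℝ} (ha0 : 0 ≤ a) (ha1 : a ≤ 1) (hle : ∀ k ∈ T, P.real {ω | ξ k ω ∈ A} ≤ a) (K : ℕ) :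
    (T.card.choose K : ℝ) * a ^ K * (1 - a) ^ (T.card - K) ≤
      P.real {ω | markCount T A (fun l => ξ l ω) < K + 1} := by
  classical
  suffices H : ∀ s : Finset ι, s ⊆ T → ∀ K : ℕ,
      (s.card.choose K : ℝ) * a ^ K * (1 - a) ^ (s.card - K) ≤
      P.real {ω | markCount s A (fun l => ξ l ω) < K + 1} from H T subset_rfl K
  intro s
  induction s using Finset.induction_on with
  | empty =>
    intro _ K
    rcases K with _ | K <;> simp [markCount_empty]
  | insert k s hk ih =>
    intro hsT K
    have hs : s ⊆ T := fun x hx => hsT (Finset.mem_insert_of_mem hx)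
    have hkT : k ∈ T := hsT (Finset.mem_insert_self _ _)
    rw [h.real_insert_lt hξ hs hkT hk hA, Finset.card_insert_of_notMem hk]
    have hq := hle k hkT
    have m : P.real {ω | markCount s A (fun l => ξ l ω) < K + 1 - 1} ≤
        P.real {ω | markCount s A (fun l => ξ l ω) < K + 1} :=
      measureReal_mono (by intro ω hω; simp only [Set.mem_ofPred_eq] at hω ⊢; omega)
    have hstep : P.real {ω | markCount s A (fun l => ξ l ω) < K + 1} * (1 - a)
        + P.real {ω | markCount s A (fun l => ξ l ω) < K + 1 - 1} * a ≤
        P.real {ω | markCount s A (fun l => ξ l ω) < K + 1} * (1 - P.real {ω | ξ k ω ∈ A})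
        + P.real {ω | markCount s A (fun l => ξ l ω) < K + 1 - 1} * P.real {ω | ξ k ω ∈ A} := by
      nlinarith
    refine le_trans ?_ hstep
    have i1 := mul_le_mul_of_nonneg_right (ih hs K) (sub_nonneg.2 ha1)
    rcases K with _ | K
    · simp only [Nat.choose_zero_right, Nat.cast_one, pow_zero, mul_one, one_mul, Nat.sub_zero,
        zero_add, Nat.sub_self, Nat.not_lt_zero] at i1 ⊢
      rw [pow_succ]
      simpa using i1
    · have i2 := mul_le_mul_of_nonneg_right (ih hs K) ha0
      refine le_trans ?_ (add_le_add i1 i2)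
      rw [Nat.choose_succ_succ, Nat.add_sub_add_right]
      rcases lt_or_ge K s.card with hK | hK
      · obtain ⟨e, he⟩ : ∃ e, s.card - K = e + 1 := ⟨s.card - K - 1, by omega⟩
        have he' : s.card - (K + 1) = e := by omega
        rw [he, he']
        push_cast
        apply le_of_eq
        ring
      · rw [Nat.choose_eq_zero_of_lt (show s.card < K + 1 by omega)]
        apply le_of_eq
        push_cast
        ring

end Counting

section Torus

lemma torusDist_le (x y : EuclideanSpace ℝ (Fin d)) (z : Fin d → ℤ) :
    torusDist x y ≤ ‖x - y - (WithLp.equiv 2 (Fin d → ℝ)).symm (fun i => (z i : ℝ))‖ :=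
  ciInf_le ⟨0, by rintro _ ⟨z, rfl⟩; exact norm_nonneg _⟩ z

lemma torusDist_nonneg (x y : EuclideanSpace ℝ (Fin d)) : 0 ≤ torusDist x y :=
  Real.iInf_nonneg fun _ => norm_nonneg _

lemma exists_torusDist_eq (x y : EuclideanSpace ℝ (Fin d)) : ∃ z : Fin d → ℤ,
    torusDist x y = ‖x - y - (WithLp.equiv 2 (Fin d → ℝ)).symm (fun i => (z i : ℝ))‖ := by
  refine ⟨fun i => round ((x - y) i), le_antisymm (torusDist_le _ _ _) (le_ciInf fun z => ?_)⟩
  rw [EuclideanSpace.norm_eq, EuclideanSpace.norm_eq]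
  refine Real.sqrt_le_sqrt (Finset.sum_le_sum fun i _ => ?_)
  refine pow_le_pow_left₀ (norm_nonneg _) ?_ 2
  simpa [Real.norm_eq_abs] using round_le ((x - y) i) (z i)

lemma torusDist_le_add (x y w : EuclideanSpace ℝ (Fin d)) :
    torusDist x y ≤ torusDist x w + torusDist y w := by
  obtain ⟨z₁, h₁⟩ := exists_torusDist_eq x w
  obtain ⟨z₂, h₂⟩ := exists_torusDist_eq y w
  rw [h₁, h₂]
  refine (torusDist_le x y (fun i => z₁ i - z₂ i)).trans ?_
  refine le_trans (le_of_eq ?_) (norm_sub_le _ _)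
  congr 1
  ext i
  simp
  ring

lemma measurable_torusDist : Measurable
    (fun p : EuclideanSpace ℝ (Fin d) × EuclideanSpace ℝ (Fin d) => torusDist p.1 p.2) := by
  unfold torusDist
  exact Measurable.iInf fun z => by fun_prop

lemma measurable_torusDist_left (x : EuclideanSpace ℝ (Fin d)) :
    Measurable (fun y : EuclideanSpace ℝ (Fin d) => torusDist x y) := by
  unfold torusDist
  exact Measurable.iInf fun z => by fun_prop

lemma measurableSet_cube : MeasurableSet (cube d) := by
  have : cube d = ⋂ i : Fin d, (fun x : EuclideanSpace ℝ (Fin d) => x i) ⁻¹'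
      Set.Ioc (-(1/2) : ℝ) (1/2) := by
    ext x
    simp [cube]
  rw [this]
  exact MeasurableSet.iInter fun i => (by fun_prop : Measurable _) measurableSet_Ioc

lemma eq_of_mem_cube_of_add_eq {x y : EuclideanSpace ℝ (Fin d)} (hx : x ∈ cube d)
    (hy : y ∈ cube d) {z w : Fin d → ℤ} (h : ∀ i, x i + z i = y i + w i) : z = w := by
  ext i
  have h1 : -(1/2 : ℝ) < x i ∧ x i ≤ 1/2 := hx i
  have h2 : -(1/2 : ℝ) < y i ∧ y i ≤ 1/2 := hy i
  have h3 : (z i : ℝ) - w i < 1 := by linarith [h i]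
  have h4 : (w i : ℝ) - z i < 1 := by linarith [h i]
  have h3' : z i - w i < 1 := by exact_mod_cast h3
  have h4' : w i - z i < 1 := by exact_mod_cast h4
  omega

/-- Integrating a function of the toroidal distance over the cube is bounded by integrating over
the whole space. -/
lemma lintegral_cube_torusDist_le {φ : ℝ → ENNReal} (hφ : Measurable φ)
    (x : EuclideanSpace ℝ (Fin d)) :
    ∫⁻ y in cube d, φ (torusDist x y) ≤ ∫⁻ y : EuclideanSpace ℝ (Fin d), φ ‖y‖ := by
  let e : (Fin d → ℤ) → EuclideanSpace ℝ (Fin d) :=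
    fun z => (WithLp.equiv 2 (Fin d → ℝ)).symm (fun i => (z i : ℝ))
  calc ∫⁻ y in cube d, φ (torusDist x y)
      ≤ ∫⁻ y in cube d, ∑' z, φ ‖x - (y + e z)‖ := by
        refine lintegral_mono fun y => ?_
        obtain ⟨z, hz⟩ := exists_torusDist_eq x y
        simp only [hz]
        rw [sub_sub]
        exact ENNReal.le_tsum (f := fun z => φ ‖x - (y + e z)‖) z
    _ = ∑' z, ∫⁻ y in cube d, φ ‖x - (y + e z)‖ :=
        lintegral_tsum fun z => (hφ.comp (by fun_prop)).aemeasurable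
    _ = ∑' z, ∫⁻ y in (fun y => y - e z) ⁻¹' cube d, φ ‖x - y‖ := by
        refine tsum_congr fun z => ?_
        have := (measurePreserving_sub_right volume (e z)).setLIntegral_comp_preimage
          (s := cube d) measurableSet_cube (f := fun y => φ ‖x - (y + e z)‖) (hφ.comp (by fun_prop))
        rw [← this]
        simp
    _ = ∫⁻ y in ⋃ z, (fun y => y - e z) ⁻¹' cube d, φ ‖x - y‖ := by
        rw [lintegral_iUnion]
        · intro z
          exact (by fun_prop : Measurable fun y => y - e z) measurableSet_cube
        · intro z w hzw
          rw [Function.onFun, Set.disjoint_left]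
          intro y h1 h2
          apply hzw
          refine eq_of_mem_cube_of_add_eq h1 h2 fun i => ?_
          simp [e]
    _ ≤ ∫⁻ y, φ ‖x - y‖ := setLIntegral_le_lintegral _ _
    _ = ∫⁻ y, φ ‖y‖ := lintegral_sub_left_eq_self (fun y => φ ‖y‖) x

end Torus

section Connection

lemma Model.antitone_g_max (M : Model d P) : Antitone fun t => M.g (max t 0) := fun s t h =>
  M.g_antitone (le_max_right s 0) (le_max_right t 0) (max_le_max_right 0 h)

lemma Model.measurable_g_max (M : Model d P) : Measurable fun t => M.g (max t 0) :=
  M.antitone_g_max.measurable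

lemma Model.measurable_g_torusDist (M : Model d P) {r : ℝ} (hr : 0 < r) : Measurable
    (fun p : EuclideanSpace ℝ (Fin d) × EuclideanSpace ℝ (Fin d) =>
      M.g (torusDist p.1 p.2 / r)) := by
  have : (fun p : EuclideanSpace ℝ (Fin d) × EuclideanSpace ℝ (Fin d) =>
      M.g (torusDist p.1 p.2 / r)) = fun p => M.g (max (torusDist p.1 p.2 / r) 0) := by
    ext p
    rw [max_eq_left (div_nonneg (torusDist_nonneg _ _) hr.le)]
  rw [this]
  exact M.measurable_g_max.comp (measurable_torusDist.div_const r)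

/-- The probability that a uniform point of the torus is linked to `x` is at most `α r^d`. -/
lemma Model.lintegral_g_torusDist_le (M : Model d P) {r : ℝ} (hr : 0 < r)
    (x : EuclideanSpace ℝ (Fin d)) :
    ∫⁻ y in cube d, ENNReal.ofReal (M.g (torusDist x y / r)) ≤ ENNReal.ofReal (M.α * r ^ d) := by
  have h1 := lintegral_cube_torusDist_le (d := d)
    (φ := fun t => ENNReal.ofReal (M.g (max (t / r) 0)))
    (ENNReal.measurable_ofReal.comp (M.measurable_g_max.comp (by fun_prop))) x
  have hmax : ∀ t : ℝ, 0 ≤ t → max (t / r) 0 = t / r := fun t ht =>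
    max_eq_left (div_nonneg ht hr.le)
  simp only [hmax _ (torusDist_nonneg _ _), hmax _ (norm_nonneg _)] at h1
  refine h1.trans (le_of_eq ?_)
  have hnorm : ∀ y : EuclideanSpace ℝ (Fin d), ‖y‖ / r = ‖r⁻¹ • y‖ := fun y => by
    rw [norm_smul, norm_inv, Real.norm_of_nonneg hr.le]; ring
  simp only [hnorm]
  rw [← ofReal_integral_eq_lintegral_ofReal
    (M.g_integrable.comp_smul (inv_ne_zero hr.ne'))
    (Eventually.of_forall fun y => (M.g_mem _ (norm_nonneg _)).1)]
  rw [Measure.integral_comp_smul volume (fun y : EuclideanSpace ℝ (Fin d) => M.g ‖y‖) r⁻¹,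
    ← M.α_def, finrank_euclideanSpace_fin]
  congr 1
  rw [inv_pow, inv_inv, abs_of_pos (pow_pos hr d), smul_eq_mul, mul_comm]

/-- The probability that a uniform point of the torus is within `R` of `x`. -/
lemma volume_torusDist_lt_le (R : ℝ) (x : EuclideanSpace ℝ (Fin d)) :
    volume.restrict (cube d) {y | torusDist x y < R} ≤
      volume (Metric.ball (0 : EuclideanSpace ℝ (Fin d)) R) := by
  have h := lintegral_cube_torusDist_le (d := d)
    (φ := (Set.Iio R).indicator (fun _ => 1)) (measurable_const.indicator measurableSet_Iio) x
  have hm : MeasurableSet {y : EuclideanSpace ℝ (Fin d) | torusDist x y < R} := 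
    measurable_torusDist_left x measurableSet_Iio
  have hb : MeasurableSet (Metric.ball (0 : EuclideanSpace ℝ (Fin d)) R) :=
    Metric.isOpen_ball.measurableSet
  have e1 := lintegral_indicator_one (μ := volume.restrict (cube d)) hm
  have e2 := lintegral_indicator_one (μ := volume) hb
  rw [← e1, ← e2]
  refine le_trans (le_of_eq ?_) (h.trans (le_of_eq ?_))
  · refine lintegral_congr fun y => ?_
    simp [Set.indicator_apply]
  · refine lintegral_congr fun y => ?_
    classical
    rw [Set.indicator_apply, Set.indicator_apply]
    simp

end Connection

section Independence

/-- Indices of the position variables and of the edge variables. -/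
abbrev SourceIndex : Type := {i : ℕ // 1 ≤ i} ⊕ {p : ℕ × ℕ // 1 ≤ p.1 ∧ p.1 < p.2}

/-- The σ-algebras generated by the individual position and edge variables. -/
abbrev Model.source (M : Model d P) : SourceIndex → MeasurableSpace Ω :=
  Sum.elim (fun i => MeasurableSpace.comap (M.X i) inferInstance)
    (fun p => MeasurableSpace.comap (M.U p.1.1 p.1.2) inferInstance)

lemma Model.source_le (M : Model d P) (s : SourceIndex) : M.source s ≤ ‹MeasurableSpace Ω› := by
  rcases s with i | p
  · exact (M.X_meas i).comap_le
  · exact (M.U_meas _ _).comap_le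

lemma Model.iIndep_source (M : Model d P) : iIndep M.source P := by
  classical
  rw [iIndep_iff]
  intro s f hf
  have hXU := M.families_indep.indep (i := 0) (j := 2) (by decide)
  rw [Indep_iff] at hXU
  have hL : MeasurableSet[MeasurableSpace.comap (fun ω => fun i : ℕ => M.X i ω) inferInstance]
      (⋂ a ∈ s.toLeft, f (Sum.inl a)) := by
    refine MeasurableSet.biInter (s.toLeft.countable_toSet) fun a ha => ?_
    have h1 := hf _ (Finset.mem_toLeft.1 ha)
    refine (MeasurableSpace.comap_le_iff_le_map.2 ?_ : MeasurableSpace.comap (M.X a) _ ≤ _) _ h1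
    intro t ht
    exact ⟨_, (measurable_pi_apply (a : ℕ)) ht, rfl⟩
  have hR : MeasurableSet[MeasurableSpace.comap (fun ω => fun p : ℕ × ℕ => M.U p.1 p.2 ω)
      inferInstance] (⋂ b ∈ s.toRight, f (Sum.inr b)) := by
    refine MeasurableSet.biInter (s.toRight.countable_toSet) fun a ha => ?_
    have h1 := hf _ (Finset.mem_toRight.1 ha)
    refine (MeasurableSpace.comap_le_iff_le_map.2 ?_ :
      MeasurableSpace.comap (M.U a.1.1 a.1.2) _ ≤ _) _ h1
    intro t ht
    exact ⟨_, (measurable_pi_apply (a.1 : ℕ × ℕ)) ht, rfl⟩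
  have hsplit : (⋂ i ∈ s, f i)
      = (⋂ a ∈ s.toLeft, f (Sum.inl a)) ∩ (⋂ b ∈ s.toRight, f (Sum.inr b)) := by
    ext ω
    simp only [Set.mem_iInter, Set.mem_inter_iff, Finset.mem_toLeft, Finset.mem_toRight,
      Sum.forall]
  have hprod : ∏ i ∈ s, P (f i)
      = (∏ a ∈ s.toLeft, P (f (Sum.inl a))) * ∏ b ∈ s.toRight, P (f (Sum.inr b)) := by
    conv_lhs => rw [← Finset.toLeft_disjSum_toRight (u := s)]
    rw [Finset.prod_disjSum]
  rw [hsplit, hprod, hXU _ _ hL hR]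
  congr 1
  · exact (iIndep_iff _ _).1 M.X_indep.iIndep s.toLeft
      fun a ha => hf _ (Finset.mem_toLeft.1 ha)
  · exact (iIndep_iff _ _).1 M.U_indep.iIndep s.toRight
      fun a ha => hf _ (Finset.mem_toRight.1 ha)

lemma Model.indepFun_of_disjoint (M : Model d P) {S T : Set SourceIndex} (hST : Disjoint S T)
    {β γ : Type*} [MeasurableSpace β] [MeasurableSpace γ] {f : Ω → β} {g : Ω → γ}
    (hf : Measurable[⨆ i ∈ S, M.source i] f) (hg : Measurable[⨆ i ∈ T, M.source i] g) :
    IndepFun f g P := by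
  have h := indep_iSup_of_disjoint M.source_le M.iIndep_source hST
  exact indep_of_indep_of_le_right (indep_of_indep_of_le_left h hf.comap_le) hg.comap_le

lemma Model.measurable_X_iSup_source (M : Model d P) {S : Set SourceIndex} {i : ℕ} (hi : 1 ≤ i)
    (h : Sum.inl ⟨i, hi⟩ ∈ S) : Measurable[⨆ s ∈ S, M.source s] (M.X i) :=
  measurable_iff_comap_le.2
    (le_iSup₂ (f := fun s (_ : s ∈ S) => M.source s) (Sum.inl ⟨i, hi⟩ : SourceIndex) h)

lemma Model.measurable_U_iSup_source (M : Model d P) {S : Set SourceIndex} {p : ℕ × ℕ}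
    (hp : 1 ≤ p.1 ∧ p.1 < p.2) (h : Sum.inr ⟨p, hp⟩ ∈ S) :
    Measurable[⨆ s ∈ S, M.source s] (M.U p.1 p.2) :=
  measurable_iff_comap_le.2
    (le_iSup₂ (f := fun s (_ : s ∈ S) => M.source s) (Sum.inr ⟨p, hp⟩ : SourceIndex) h)

/-- What vertices `i` and `j` see of vertex `k`: its position and its two edge variables. -/
def Model.mark (M : Model d P) (i j k : ℕ) (ω : Ω) : EuclideanSpace ℝ (Fin d) × ℝ × ℝ :=
  (M.X k ω, M.U (min i k) (max i k) ω, M.U (min j k) (max j k) ω)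

lemma Model.measurable_mark (M : Model d P) (i j k : ℕ) : Measurable (M.mark i j k) :=
  (M.X_meas k).prodMk ((M.U_meas _ _).prodMk (M.U_meas _ _))

/-- The sources on which `mark i j k` depends. -/
def markSources (i j k : ℕ) : Set SourceIndex :=
  {s | Sum.elim (fun a => a.1 = k)
    (fun p => p.1 = (min i k, max i k) ∨ p.1 = (min j k, max j k)) s}

/-- The sources of the positions of vertices `i` and `j`. -/
def positionSources (i j : ℕ) : Set SourceIndex :=
  {s | Sum.elim (fun a => a.1 = i ∨ a.1 = j) (fun _ => False) s}

lemma Model.measurable_mark_iSup_source (M : Model d P) {S : Set SourceIndex} {i j k : ℕ}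
    (hi : 1 ≤ i) (hj : 1 ≤ j) (hk : 1 ≤ k) (hik : i ≠ k) (hjk : j ≠ k)
    (hS : markSources i j k ⊆ S) : Measurable[⨆ s ∈ S, M.source s] (M.mark i j k) := by
  refine Measurable.prodMk ?_ (Measurable.prodMk ?_ ?_)
  · exact M.measurable_X_iSup_source hk (hS (by simp [markSources]))
  · exact M.measurable_U_iSup_source (p := (min i k, max i k))
      ⟨by simp; omega, by simp; omega⟩ (hS (by simp [markSources]))
  · exact M.measurable_U_iSup_source (p := (min j k, max j k))
      ⟨by simp; omega, by simp; omega⟩ (hS (by simp [markSources]))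

lemma Model.indepMarks_mark (M : Model d P) {i j : ℕ} (hi : 1 ≤ i) (hj : 1 ≤ j)
    {T : Finset ℕ} (hT : ∀ k ∈ T, 1 ≤ k ∧ i ≠ k ∧ j ≠ k) :
    IndepMarks P T (M.mark i j) := by
  intro s hs k hk hks
  refine M.indepFun_of_disjoint (S := ⋃ l ∈ s, markSources i j l) (T := markSources i j k) ?_ ?_ ?_
  · rw [Set.disjoint_left]
    rintro (a | ⟨⟨p, q⟩, hpq⟩) h1 h2
    · simp only [markSources, Set.mem_iUnion, Set.mem_ofPred_eq, Sum.elim_inl] at h1 h2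
      obtain ⟨l, hl, h1⟩ := h1
      rw [← h2, h1] at hks
      exact hks hl
    · simp only [markSources, Set.mem_iUnion, Set.mem_ofPred_eq, Sum.elim_inr,
        Prod.mk.injEq] at h1 h2
      obtain ⟨l, hl, h1⟩ := h1
      have hlk : l ≠ k := fun h => hks (h ▸ hl)
      have h3 := hT l (hs hl)
      have h4 := hT k hk
      simp only at hpq
      omega
  · refine (@measurable_pi_iff Ω s _ (⨆ a ∈ ⋃ l ∈ s, markSources i j l, M.source a) _ _).2
      fun l => ?_
    have h3 := hT l (hs l.2)
    refine M.measurable_mark_iSup_source hi hj h3.1 h3.2.1 h3.2.2 ?_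
    exact Set.subset_biUnion_of_mem (u := fun l => markSources i j l) l.2
  · have h3 := hT k hk
    exact M.measurable_mark_iSup_source hi hj h3.1 h3.2.1 h3.2.2 subset_rfl

lemma Model.indepFun_positions_marks (M : Model d P) {i j : ℕ} (hi : 1 ≤ i) (hj : 1 ≤ j)
    {T : Finset ℕ} (hT : ∀ k ∈ T, 1 ≤ k ∧ i ≠ k ∧ j ≠ k) :
    IndepFun (fun ω => (M.X i ω, M.X j ω)) (fun ω (k : T) => M.mark i j k ω) P := by
  refine M.indepFun_of_disjoint (S := positionSources i j) (T := ⋃ l ∈ T, markSources i j l) ?_ ?_ ?_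
  · rw [Set.disjoint_left]
    rintro (a | p) h1 h2
    · simp only [markSources, positionSources, Set.mem_iUnion, Set.mem_ofPred_eq,
        Sum.elim_inl] at h1 h2
      obtain ⟨l, hl, h2⟩ := h2
      have := hT l hl
      omega
    · simp [positionSources] at h1
  · refine Measurable.prodMk ?_ ?_
    · exact M.measurable_X_iSup_source hi (by simp [positionSources])
    · exact M.measurable_X_iSup_source hj (by simp [positionSources])
  · refine (@measurable_pi_iff Ω T _ (⨆ a ∈ ⋃ l ∈ T, markSources i j l, M.source a) _ _).2
      fun l => ?_
    have h3 := hT l l.2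
    refine M.measurable_mark_iSup_source hi hj h3.1 h3.2.1 h3.2.2 ?_
    exact Set.subset_biUnion_of_mem (u := fun l => markSources i j l) l.2

lemma Model.map_positions [IsProbabilityMeasure P] (M : Model d P) {i j : ℕ} (hi : 1 ≤ i)
    (hj : 1 ≤ j) (hij : i ≠ j) :
    P.map (fun ω => (M.X i ω, M.X j ω))
      = (volume.restrict (cube d)).prod (volume.restrict (cube d)) := by
  have h : IndepFun (M.X i) (M.X j) P := by
    refine M.indepFun_of_disjoint (S := {Sum.inl ⟨i, hi⟩}) (T := {Sum.inl ⟨j, hj⟩}) ?_ ?_ ?_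
    · simp [hij]
    · exact M.measurable_X_iSup_source hi rfl
    · exact M.measurable_X_iSup_source hj rfl
  rw [(indepFun_iff_map_prod_eq_prod_map_map (M.X_meas i).aemeasurable
    (M.X_meas j).aemeasurable).1 h, M.X_unif i hi, M.X_unif j hj]

lemma Model.map_mark [IsProbabilityMeasure P] (M : Model d P) {i j k : ℕ} (hi : 1 ≤ i)
    (hj : 1 ≤ j) (hk : 1 ≤ k) (hij : i ≠ j) (hik : i ≠ k) (hjk : j ≠ k) :
    P.map (M.mark i j k) = (volume.restrict (cube d)).prod
      ((volume.restrict (Set.Icc (0 : ℝ) 1)).prod (volume.restrict (Set.Icc (0 : ℝ) 1))) := by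
  have h1 : 1 ≤ min i k ∧ min i k < max i k := ⟨by omega, by omega⟩
  have h2 : 1 ≤ min j k ∧ min j k < max j k := ⟨by omega, by omega⟩
  have hU : IndepFun (M.U (min i k) (max i k)) (M.U (min j k) (max j k)) P := by
    refine M.indepFun_of_disjoint (S := {Sum.inr ⟨(min i k, max i k), h1⟩})
      (T := {Sum.inr ⟨(min j k, max j k), h2⟩}) ?_ ?_ ?_
    · simp only [Set.disjoint_singleton, ne_eq, Sum.inr.injEq, Subtype.mk.injEq, Prod.mk.injEq]
      omega
    · exact M.measurable_U_iSup_source (p := (min i k, max i k)) h1 (Set.mem_singleton _)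
    · exact M.measurable_U_iSup_source (p := (min j k, max j k)) h2 (Set.mem_singleton _)
  have hXU : IndepFun (M.X k)
      (fun ω => (M.U (min i k) (max i k) ω, M.U (min j k) (max j k) ω)) P := by
    refine M.indepFun_of_disjoint (S := {Sum.inl ⟨k, hk⟩})
      (T := {Sum.inr ⟨(min i k, max i k), h1⟩, Sum.inr ⟨(min j k, max j k), h2⟩}) ?_ ?_ ?_
    · simp
    · exact M.measurable_X_iSup_source hk rfl
    · refine Measurable.prodMk ?_ ?_
      · exact M.measurable_U_iSup_source (p := (min i k, max i k)) h1 (by simp)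
      · exact M.measurable_U_iSup_source (p := (min j k, max j k)) h2 (by simp)
  have e1 := (indepFun_iff_map_prod_eq_prod_map_map (M.U_meas _ _).aemeasurable
    (M.U_meas _ _).aemeasurable).1 hU
  have e2 := (indepFun_iff_map_prod_eq_prod_map_map (M.X_meas k).aemeasurable
    ((M.U_meas _ _).prodMk (M.U_meas _ _)).aemeasurable).1 hXU
  rw [M.U_unif _ _ h1.1 h1.2, M.U_unif _ _ h2.1 h2.2] at e1
  rw [e1, M.X_unif k hk] at e2
  exact e2

end Independence

section PairBounds

/-- The marks of vertices joined to a vertex at `x` through the first edge variable. -/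
def Model.nbrFst (M : Model d P) (r : ℝ) (x : EuclideanSpace ℝ (Fin d)) :
    Set (EuclideanSpace ℝ (Fin d) × ℝ × ℝ) :=
  {p | p.2.1 ≤ M.g (torusDist x p.1 / r)}

/-- The marks of vertices joined to a vertex at `x` through the second edge variable. -/
def Model.nbrSnd (M : Model d P) (r : ℝ) (x : EuclideanSpace ℝ (Fin d)) :
    Set (EuclideanSpace ℝ (Fin d) × ℝ × ℝ) :=
  {p | p.2.2 ≤ M.g (torusDist x p.1 / r)}

/-- The law of `mark i j k`. -/
def markLaw (d : ℕ) : Measure (EuclideanSpace ℝ (Fin d) × ℝ × ℝ) :=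
  (volume.restrict (cube d)).prod
    ((volume.restrict (Set.Icc (0 : ℝ) 1)).prod (volume.restrict (Set.Icc (0 : ℝ) 1)))

lemma Model.measurableSet_nbrFst_prod (M : Model d P) {r : ℝ} (hr : 0 < r) : MeasurableSet
    {q : EuclideanSpace ℝ (Fin d) × (EuclideanSpace ℝ (Fin d) × ℝ × ℝ) |
      q.2 ∈ M.nbrFst r q.1} := by
  have h := (M.measurable_g_torusDist hr).comp
    (f := fun q : EuclideanSpace ℝ (Fin d) × (EuclideanSpace ℝ (Fin d) × ℝ × ℝ) => (q.1, q.2.1))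
    (by fun_prop)
  exact measurableSet_le (by fun_prop) h

lemma Model.measurableSet_nbrSnd_prod (M : Model d P) {r : ℝ} (hr : 0 < r) : MeasurableSet
    {q : EuclideanSpace ℝ (Fin d) × (EuclideanSpace ℝ (Fin d) × ℝ × ℝ) |
      q.2 ∈ M.nbrSnd r q.1} := by
  have h := (M.measurable_g_torusDist hr).comp
    (f := fun q : EuclideanSpace ℝ (Fin d) × (EuclideanSpace ℝ (Fin d) × ℝ × ℝ) => (q.1, q.2.1))
    (by fun_prop)
  exact measurableSet_le (by fun_prop) h

lemma Model.measurableSet_nbrFst (M : Model d P) {r : ℝ} (hr : 0 < r)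
    (x : EuclideanSpace ℝ (Fin d)) : MeasurableSet (M.nbrFst r x) :=
  measurable_prodMk_left (x := x) (M.measurableSet_nbrFst_prod hr)

lemma Model.measurableSet_nbrSnd (M : Model d P) {r : ℝ} (hr : 0 < r)
    (x : EuclideanSpace ℝ (Fin d)) : MeasurableSet (M.nbrSnd r x) :=
  measurable_prodMk_left (x := x) (M.measurableSet_nbrSnd_prod hr)

lemma volume_restrict_Icc_Iic {t : ℝ} (ht : t ∈ Set.Icc (0 : ℝ) 1) :
    volume.restrict (Set.Icc (0 : ℝ) 1) (Set.Iic t) = ENNReal.ofReal t := by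
  rw [Measure.restrict_apply measurableSet_Iic]
  have : Set.Iic t ∩ Set.Icc (0 : ℝ) 1 = Set.Icc 0 t := by
    ext u
    simp only [Set.mem_inter_iff, Set.mem_Iic, Set.mem_Icc]
    constructor
    · rintro ⟨h, h', _⟩; exact ⟨h', h⟩
    · rintro ⟨h, h'⟩; exact ⟨h', h, h'.trans ht.2⟩
  rw [this, Real.volume_Icc, sub_zero]

lemma Model.g_torusDist_mem (M : Model d P) {r : ℝ} (hr : 0 < r)
    (x y : EuclideanSpace ℝ (Fin d)) : M.g (torusDist x y / r) ∈ Set.Icc (0 : ℝ) 1 :=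
  M.g_mem _ (div_nonneg (torusDist_nonneg _ _) hr.le)

lemma Model.measurable_g_torusDist_left (M : Model d P) {r : ℝ} (hr : 0 < r)
    (w : EuclideanSpace ℝ (Fin d)) : Measurable fun z => M.g (torusDist w z / r) := by
  have : (fun z => M.g (torusDist w z / r)) = fun z => M.g (max (torusDist w z / r) 0) := by
    ext z
    rw [max_eq_left (div_nonneg (torusDist_nonneg _ _) hr.le)]
  rw [this]
  exact M.measurable_g_max.comp ((measurable_torusDist_left w).div_const r)

lemma Model.markLaw_nbrFst_le (M : Model d P) {r : ℝ} (hr : 0 < r)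
    (x : EuclideanSpace ℝ (Fin d)) :
    markLaw d (M.nbrFst r x) ≤ ENNReal.ofReal (M.α * r ^ d) := by
  rw [markLaw, Measure.prod_apply (M.measurableSet_nbrFst hr x)]
  refine le_trans (le_of_eq (lintegral_congr fun z => ?_)) (M.lintegral_g_torusDist_le hr x)
  have : Prod.mk z ⁻¹' M.nbrFst r x = Set.Iic (M.g (torusDist x z / r)) ×ˢ Set.univ := by
    ext ⟨u, v⟩; simp [Model.nbrFst]
  rw [this, Measure.prod_prod, volume_restrict_Icc_Iic (M.g_torusDist_mem hr x z)]
  simp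

lemma Model.g_mul_g_le (M : Model d P) {r R : ℝ} (hr : 0 < r) (hR : 0 ≤ R)
    {x y : EuclideanSpace ℝ (Fin d)} (hxy : R ≤ torusDist x y) (z : EuclideanSpace ℝ (Fin d)) :
    M.g (torusDist x z / r) * M.g (torusDist y z / r) ≤
      M.g (R / (2 * r)) * (M.g (torusDist x z / r) + M.g (torusDist y z / r)) := by
  have h1 := M.g_torusDist_mem hr x z
  have h2 := M.g_torusDist_mem hr y z
  have h3 : M.g (R / (2 * r)) ∈ Set.Icc (0 : ℝ) 1 := M.g_mem _ (by positivity)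
  have key : ∀ t, R / 2 ≤ t → M.g (t / r) ≤ M.g (R / (2 * r)) := by
    intro t ht
    have h : R / (2 * r) ≤ t / r := by
      rw [div_mul_eq_div_div]; gcongr
    have h0 : 0 ≤ R / (2 * r) := by positivity
    exact M.g_antitone h0 (h0.trans h) h
  rcases le_total (R / 2) (torusDist x z) with h | h
  · nlinarith [key _ h, h1.1, h2.1, h3.1]
  · have h' : R / 2 ≤ torusDist y z := by linarith [torusDist_le_add x y z]
    nlinarith [key _ h', h1.1, h2.1, h3.1]

lemma Model.markLaw_inter_le (M : Model d P) {r R : ℝ} (hr : 0 < r) (hR : 0 ≤ R)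
    {x y : EuclideanSpace ℝ (Fin d)} (hxy : R ≤ torusDist x y) :
    markLaw d (M.nbrFst r x ∩ M.nbrSnd r y) ≤
      ENNReal.ofReal (2 * M.g (R / (2 * r)) * (M.α * r ^ d)) := by
  have h3 : M.g (R / (2 * r)) ∈ Set.Icc (0 : ℝ) 1 := M.g_mem _ (by positivity)
  rw [markLaw, Measure.prod_apply ((M.measurableSet_nbrFst hr x).inter
    (M.measurableSet_nbrSnd hr y))]
  calc _ ≤ ∫⁻ z in cube d, ENNReal.ofReal (M.g (R / (2 * r))) *
        (ENNReal.ofReal (M.g (torusDist x z / r)) + ENNReal.ofReal (M.g (torusDist y z / r))) := by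
        refine lintegral_mono fun z => ?_
        have h1 := M.g_torusDist_mem hr x z
        have h2 := M.g_torusDist_mem hr y z
        have : Prod.mk z ⁻¹' (M.nbrFst r x ∩ M.nbrSnd r y)
            = Set.Iic (M.g (torusDist x z / r)) ×ˢ Set.Iic (M.g (torusDist y z / r)) := by
          ext ⟨u, v⟩; simp [Model.nbrSnd, Model.nbrFst]
        rw [this, Measure.prod_prod, volume_restrict_Icc_Iic h1, volume_restrict_Icc_Iic h2,
          ← ENNReal.ofReal_mul h1.1, ← ENNReal.ofReal_add h1.1 h2.1, ← ENNReal.ofReal_mul h3.1]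
        exact ENNReal.ofReal_le_ofReal (M.g_mul_g_le hr hR hxy z)
    _ = ENNReal.ofReal (M.g (R / (2 * r))) *
        ((∫⁻ z in cube d, ENNReal.ofReal (M.g (torusDist x z / r))) +
          ∫⁻ z in cube d, ENNReal.ofReal (M.g (torusDist y z / r))) := by
        have hm : ∀ w : EuclideanSpace ℝ (Fin d),
            Measurable fun z => ENNReal.ofReal (M.g (torusDist w z / r)) := fun w =>
          (M.measurable_g_torusDist_left hr w).ennreal_ofReal
        rw [lintegral_const_mul' _ _ ENNReal.ofReal_ne_top, lintegral_add_left (hm x)]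
    _ ≤ ENNReal.ofReal (M.g (R / (2 * r))) *
        (ENNReal.ofReal (M.α * r ^ d) + ENNReal.ofReal (M.α * r ^ d)) := by
        gcongr
        · exact M.lintegral_g_torusDist_le hr x
        · exact M.lintegral_g_torusDist_le hr y
    _ = _ := by
        have ha : 0 ≤ M.α * r ^ d := mul_nonneg M.α_pos.le (by positivity)
        rw [← ENNReal.ofReal_add ha ha, ← ENNReal.ofReal_mul h3.1]
        congr 1
        ring

lemma measurable_markCount_prod {ι A F : Type*} [MeasurableSpace A] [MeasurableSpace F]
    (T : Finset ι) {W : A → Set F} (hW : MeasurableSet {q : A × F | q.2 ∈ W q.1}) :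
    Measurable (fun q : A × (ι → F) => markCount T (W q.1) q.2) := by
  classical
  have : (fun q : A × (ι → F) => markCount T (W q.1) q.2)
      = fun q => ∑ k ∈ T, ({q : A × F | q.2 ∈ W q.1}.indicator (fun _ => (1 : ℕ)) (q.1, q.2 k)) := by
    ext q
    rw [markCount, Finset.card_filter]
    rfl
  rw [this]
  refine Finset.measurable_sum _ fun k _ => ?_
  exact (measurable_const.indicator hW).comp
    (measurable_fst.prodMk ((measurable_pi_apply k).comp measurable_snd))

variable [IsProbabilityMeasure P]

lemma Model.measure_mark_mem (M : Model d P) {i j k : ℕ} (hi : 1 ≤ i)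
    (hj : 1 ≤ j) (hk : 1 ≤ k) (hij : i ≠ j) (hik : i ≠ k) (hjk : j ≠ k)
    {A : Set (EuclideanSpace ℝ (Fin d) × ℝ × ℝ)} (hA : MeasurableSet A) :
    P {ω | M.mark i j k ω ∈ A} = markLaw d A := by
  rw [markLaw, ← M.map_mark hi hj hk hij hik hjk, Measure.map_apply (M.measurable_mark i j k) hA]
  rfl

/-- Conditioning on the positions of two vertices. -/
lemma Model.measure_positions_marks (M : Model d P) {i j : ℕ} (hi : 1 ≤ i) (hj : 1 ≤ j)
    (hij : i ≠ j) {T : Finset ℕ} (hT : ∀ k ∈ T, 1 ≤ k ∧ i ≠ k ∧ j ≠ k)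
    {S : Set ((EuclideanSpace ℝ (Fin d) × EuclideanSpace ℝ (Fin d)) ×
      (T → EuclideanSpace ℝ (Fin d) × ℝ × ℝ))} (hS : MeasurableSet S) :
    P {ω | ((M.X i ω, M.X j ω), fun k : T => M.mark i j k ω) ∈ S} =
      ∫⁻ p, P {ω | (p, fun k : T => M.mark i j k ω) ∈ S}
        ∂((volume.restrict (cube d)).prod (volume.restrict (cube d))) := by
  have hpos : Measurable fun ω => (M.X i ω, M.X j ω) := (M.X_meas i).prodMk (M.X_meas j)
  have hV : Measurable fun ω (k : T) => M.mark i j k ω :=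
    measurable_pi_lambda _ fun k => M.measurable_mark i j k
  have h := (indepFun_iff_map_prod_eq_prod_map_map hpos.aemeasurable hV.aemeasurable).1
    (M.indepFun_positions_marks hi hj hT)
  rw [M.map_positions hi hj hij] at h
  have h2 : P {ω | ((M.X i ω, M.X j ω), fun k : T => M.mark i j k ω) ∈ S}
      = P.map (fun ω => ((M.X i ω, M.X j ω), fun k : T => M.mark i j k ω)) S := by
    rw [Measure.map_apply (hpos.prodMk hV) hS]; rfl
  have := Measure.isProbabilityMeasure_map (μ := P) hV.aemeasurable
  rw [h2, h, Measure.prod_apply hS]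
  refine lintegral_congr fun p => ?_
  rw [Measure.map_apply hV (measurable_prodMk_left hS)]
  rfl

end PairBounds

section PairCounts

open Classical in
/-- The number of vertices `k ∈ T` joined to vertex `i` at scale `r`. -/
def Model.nbrCount (M : Model d P) (r : ℝ) (T : Finset ℕ) (i : ℕ) (ω : Ω) : ℕ :=
  (T.filter fun k =>
    M.U (min i k) (max i k) ω ≤ M.g (torusDist (M.X i ω) (M.X k ω) / r)).card

lemma Model.measurableSet_counts (M : Model d P) {r : ℝ} (hr : 0 < r) (T : Finset ℕ)
    (Q : ℕ → ℕ → Prop) : MeasurableSet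
    {q : (EuclideanSpace ℝ (Fin d) × EuclideanSpace ℝ (Fin d)) ×
      (T → EuclideanSpace ℝ (Fin d) × ℝ × ℝ) |
      Q (markCount Finset.univ (M.nbrFst r q.1.1) q.2)
        (markCount Finset.univ (M.nbrSnd r q.1.2) q.2)} := by
  have h1 := (measurable_markCount_prod (Finset.univ : Finset T)
    (M.measurableSet_nbrFst_prod hr)).comp
    (f := fun q : (EuclideanSpace ℝ (Fin d) × EuclideanSpace ℝ (Fin d)) ×
      (T → EuclideanSpace ℝ (Fin d) × ℝ × ℝ) => (q.1.1, q.2)) (by fun_prop)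
  have h2 := (measurable_markCount_prod (Finset.univ : Finset T)
    (M.measurableSet_nbrSnd_prod hr)).comp
    (f := fun q : (EuclideanSpace ℝ (Fin d) × EuclideanSpace ℝ (Fin d)) ×
      (T → EuclideanSpace ℝ (Fin d) × ℝ × ℝ) => (q.1.2, q.2)) (by fun_prop)
  exact (h1.prodMk h2) (MeasurableSet.of_discrete (s := {p : ℕ × ℕ | Q p.1 p.2}))

lemma Model.markCount_univ_mark (M : Model d P) (T : Finset ℕ) (i j : ℕ) (ω : Ω)
    (A : Set (EuclideanSpace ℝ (Fin d) × ℝ × ℝ)) :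
    markCount (Finset.univ : Finset T) A (fun k => M.mark i j k ω)
      = markCount T A (fun k => M.mark i j k ω) :=
  markCount_univ_subtype T A fun k => M.mark i j k ω

lemma markCount_diff_lt {ι F : Type*} {T : Finset ι} {A B : Set F} {v : ι → F} {K : ℕ}
    (h : markCount T (A \ B) v < K) : markCount T A v < K ∨ ∃ k ∈ T, v k ∈ A ∩ B := by
  classical
  by_contra! hc
  refine absurd h (not_lt.2 (hc.1.trans (Finset.card_le_card ?_)))
  intro k hk
  simp only [Finset.mem_filter] at hk ⊢
  exact ⟨hk.1, hk.2, fun hB => hc.2 k hk.1 ⟨hk.2, hB⟩⟩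

lemma Model.measure_markCount_diff_le (M : Model d P) {i j : ℕ} {T : Finset ℕ}
    {A B : Set (EuclideanSpace ℝ (Fin d) × ℝ × ℝ)} {s : ENNReal}
    (hs : ∀ k ∈ T, P {ω | M.mark i j k ω ∈ A ∩ B} ≤ s) (K : ℕ) :
    P {ω | markCount T (A \ B) (fun k => M.mark i j k ω) < K} ≤
      P {ω | markCount T A (fun k => M.mark i j k ω) < K} + T.card * s := by
  calc _ ≤ P ({ω | markCount T A (fun k => M.mark i j k ω) < K} ∪
        ⋃ k ∈ T, {ω | M.mark i j k ω ∈ A ∩ B}) := by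
        refine measure_mono fun ω hω => ?_
        rcases markCount_diff_lt hω with h | ⟨k, hk, h⟩
        · exact Or.inl h
        · exact Or.inr (Set.mem_biUnion hk h)
    _ ≤ _ := by
        refine (measure_union_le _ _).trans (add_le_add_right ?_ _)
        refine (measure_biUnion_finset_le T _).trans ?_
        refine (Finset.sum_le_sum hs).trans ?_
        simp

variable [IsProbabilityMeasure P]

lemma Model.measure_nbrCounts (M : Model d P) {r : ℝ} (hr : 0 < r) {i j : ℕ} (hi : 1 ≤ i)
    (hj : 1 ≤ j) (hij : i ≠ j) {T : Finset ℕ} (hT : ∀ k ∈ T, 1 ≤ k ∧ i ≠ k ∧ j ≠ k)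
    (Q : ℕ → ℕ → Prop) :
    P {ω | Q (M.nbrCount r T i ω) (M.nbrCount r T j ω)} =
      ∫⁻ p, P {ω | Q (markCount T (M.nbrFst r p.1) (fun k => M.mark i j k ω))
        (markCount T (M.nbrSnd r p.2) (fun k => M.mark i j k ω))}
        ∂((volume.restrict (cube d)).prod (volume.restrict (cube d))) := by
  have h := M.measure_positions_marks hi hj hij hT (M.measurableSet_counts hr T Q)
  simp only [Set.mem_ofPred_eq, M.markCount_univ_mark] at h
  exact h

lemma Model.measurable_measure_counts (M : Model d P) {r : ℝ} (hr : 0 < r) (i j : ℕ)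
    (T : Finset ℕ) (Q : ℕ → ℕ → Prop) :
    Measurable fun p : EuclideanSpace ℝ (Fin d) × EuclideanSpace ℝ (Fin d) =>
      P {ω | Q (markCount T (M.nbrFst r p.1) (fun k => M.mark i j k ω))
        (markCount T (M.nbrSnd r p.2) (fun k => M.mark i j k ω))} := by
  have mV : Measurable fun ω (k : T) => M.mark i j k ω :=
    measurable_pi_lambda _ fun k => M.measurable_mark i j k
  have := Measure.isProbabilityMeasure_map (μ := P) mV.aemeasurable
  have hS := M.measurableSet_counts hr T Q
  have h1 := measurable_measure_prodMk_left (ν := P.map fun ω (k : T) => M.mark i j k ω) hS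
  convert h1 using 2 with p
  rw [Measure.map_apply mV (measurable_prodMk_left hS)]
  simp only [Set.preimage, Set.mem_ofPred_eq, M.markCount_univ_mark]

lemma isProbabilityMeasure_cube (M : Model d P) :
    IsProbabilityMeasure (volume.restrict (cube d)) := by
  rw [← M.X_unif 1 le_rfl]
  exact Measure.isProbabilityMeasure_map (M.X_meas 1).aemeasurable

lemma Model.choose_mul_le_real_nbrCount (M : Model d P) {r : ℝ} (hr : 0 < r)
    (ha : M.α * r ^ d ≤ 1) {i : ℕ} (hi : 1 ≤ i) {T : Finset ℕ} (hT : ∀ k ∈ T, 1 ≤ k ∧ i ≠ k)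
    (K : ℕ) :
    (T.card.choose K : ℝ) * (M.α * r ^ d) ^ K * (1 - M.α * r ^ d) ^ (T.card - K) ≤
      P.real {ω | M.nbrCount r T i ω < K + 1} := by
  have hprob := isProbabilityMeasure_cube M
  set j := i + T.sup id + 1 with hjdef
  have hT' : ∀ k ∈ T, 1 ≤ k ∧ i ≠ k ∧ j ≠ k := by
    intro k hk
    have : k ≤ T.sup id := Finset.le_sup (f := id) hk
    have := hT k hk
    omega
  have ha0 : 0 ≤ M.α * r ^ d := mul_nonneg M.α_pos.le (by positivity)
  have h := M.measure_nbrCounts hr hi (j := j) (by omega) (by omega) hT' (fun m _ => m < K + 1)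
  rw [measureReal_def, h]
  rw [← ENNReal.ofReal_le_iff_le_toReal]
  · calc ENNReal.ofReal _ = ∫⁻ p, ENNReal.ofReal ((T.card.choose K : ℝ) * (M.α * r ^ d) ^ K *
          (1 - M.α * r ^ d) ^ (T.card - K))
          ∂((volume.restrict (cube d)).prod (volume.restrict (cube d))) := by simp
      _ ≤ _ := by
        refine lintegral_mono fun p => ?_
        have h1 := (M.indepMarks_mark hi (j := j) (by omega) hT').choose_mul_le_real_lt
          (M.measurable_mark i j) (M.measurableSet_nbrFst hr p.1) ha0 ha (K := K) ?_
        · exact (ENNReal.ofReal_le_iff_le_toReal (measure_ne_top _ _)).2 h1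
        · intro k hk
          have := hT' k hk
          rw [measureReal_def, M.measure_mark_mem hi (by omega) this.1 (by omega) this.2.1
            this.2.2 (M.measurableSet_nbrFst hr p.1)]
          exact ENNReal.toReal_le_of_le_ofReal ha0 (M.markLaw_nbrFst_le hr p.1)
  · rw [← h]; exact measure_ne_top _ _

lemma Model.real_joined_le (M : Model d P) {r : ℝ} (hr : 0 < r) {i j : ℕ} (hi : 1 ≤ i)
    (hj : 1 ≤ j) (hij : i ≠ j) :
    P.real {ω | M.U (min i j) (max i j) ω ≤ M.g (torusDist (M.X i ω) (M.X j ω) / r)} ≤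
      M.α * r ^ d := by
  have hprob := isProbabilityMeasure_cube M
  have ha0 : 0 ≤ M.α * r ^ d := mul_nonneg M.α_pos.le (by positivity)
  have hT : ∀ k ∈ ({j} : Finset ℕ), 1 ≤ k ∧ i ≠ k ∧ i + j ≠ k := by
    simp only [Finset.mem_singleton]; omega
  have h := M.measure_positions_marks hi (j := i + j) (by omega) (by omega) hT
    (S := {q | q.2 ⟨j, by simp⟩ ∈ M.nbrFst r q.1.1}) (by
      have hm : Measurable fun q : (EuclideanSpace ℝ (Fin d) × EuclideanSpace ℝ (Fin d)) ×
        (({j} : Finset ℕ) → EuclideanSpace ℝ (Fin d) × ℝ × ℝ) =>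
          (q.1.1, q.2 ⟨j, by simp⟩) := by fun_prop
      exact hm (M.measurableSet_nbrFst_prod hr))
  simp only [Set.mem_ofPred_eq] at h
  refine ENNReal.toReal_le_of_le_ofReal ha0 ?_
  refine h.le.trans ?_
  calc _ ≤ ∫⁻ p, ENNReal.ofReal (M.α * r ^ d)
          ∂((volume.restrict (cube d)).prod (volume.restrict (cube d))) := by
        refine lintegral_mono fun p => ?_
        rw [M.measure_mark_mem hi (by omega) hj (by omega) hij (by omega)
            (M.measurableSet_nbrFst hr p.1)]
        exact M.markLaw_nbrFst_le hr p.1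
    _ = _ := by simp

lemma Model.measure_counts_le_of_far (M : Model d P) {r R : ℝ} (hr : 0 < r) (hR : 0 ≤ R)
    {i j : ℕ} (hi : 1 ≤ i) (hj : 1 ≤ j) (hij : i ≠ j) {T : Finset ℕ}
    (hT : ∀ k ∈ T, 1 ≤ k ∧ i ≠ k ∧ j ≠ k) (K : ℕ) {x y : EuclideanSpace ℝ (Fin d)}
    (hxy : R ≤ torusDist x y) :
    P {ω | markCount T (M.nbrFst r x) (fun k => M.mark i j k ω) < K ∧
        markCount T (M.nbrSnd r y) (fun k => M.mark i j k ω) < K} ≤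
      (P {ω | markCount T (M.nbrFst r x) (fun k => M.mark i j k ω) < K} +
        T.card * ENNReal.ofReal (2 * M.g (R / (2 * r)) * (M.α * r ^ d))) *
      (P {ω | markCount T (M.nbrSnd r y) (fun k => M.mark i j k ω) < K} +
        T.card * ENNReal.ofReal (2 * M.g (R / (2 * r)) * (M.α * r ^ d))) := by
  have hA := M.measurableSet_nbrFst hr x
  have hB := M.measurableSet_nbrSnd hr y
  have hs : ∀ k ∈ T, P {ω | M.mark i j k ω ∈ M.nbrFst r x ∩ M.nbrSnd r y} ≤
      ENNReal.ofReal (2 * M.g (R / (2 * r)) * (M.α * r ^ d)) := by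
    intro k hk
    have := hT k hk
    rw [M.measure_mark_mem hi hj this.1 hij this.2.1 this.2.2 (hA.inter hB)]
    exact M.markLaw_inter_le hr hR hxy
  have hs' := hs
  simp only [Set.inter_comm (M.nbrFst r x)] at hs'
  have hmain := (M.indepMarks_mark hi hj hT).real_lt_and_lt_le (M.measurable_mark i j)
    (hA.diff hB) (hB.diff hA) disjoint_sdiff_sdiff K K
  calc _ ≤ P {ω | markCount T (M.nbrFst r x \ M.nbrSnd r y) (fun k => M.mark i j k ω) < K ∧
        markCount T (M.nbrSnd r y \ M.nbrFst r x) (fun k => M.mark i j k ω) < K} := by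
        refine measure_mono ?_
        intro ω hω
        exact ⟨(markCount_mono subset_rfl Set.sdiff_subset).trans_lt hω.1,
          (markCount_mono subset_rfl Set.sdiff_subset).trans_lt hω.2⟩
    _ ≤ P {ω | markCount T (M.nbrFst r x \ M.nbrSnd r y) (fun k => M.mark i j k ω) < K} *
        P {ω | markCount T (M.nbrSnd r y \ M.nbrFst r x) (fun k => M.mark i j k ω) < K} := by
        simp only [measureReal_def, ← ENNReal.toReal_mul] at hmain
        exact (ENNReal.toReal_le_toReal (measure_ne_top _ _)
          (ENNReal.mul_ne_top (measure_ne_top _ _) (measure_ne_top _ _))).1 hmain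
    _ ≤ _ := mul_le_mul' (M.measure_markCount_diff_le hs K) (M.measure_markCount_diff_le hs' K)

lemma measurable_of_comp_diag {E β : Type*} [MeasurableSpace E] [MeasurableSpace β]
    {F : E × E → β} (hF : Measurable F) : Measurable fun x => F (x, x) :=
  hF.comp (measurable_id.prodMk measurable_id)

lemma lintegral_prod_le_of_near_far {E : Type*} [MeasurableSpace E] {μ : Measure E}
    [IsProbabilityMeasure μ] {f h : E → ENNReal} (mf : Measurable f) (mh : Measurable h)
    {ψ : E × E → ENNReal} {near : Set (E × E)} (mnear : MeasurableSet near) {v s : ENNReal}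
    (hv : ∀ x, μ {y | (x, y) ∈ near} ≤ v) (hnear : ∀ p, ψ p ≤ f p.1)
    (hfar : ∀ p, p ∉ near → ψ p ≤ (f p.1 + s) * (h p.2 + s)) :
    ∫⁻ p, ψ p ∂(μ.prod μ) ≤
      (∫⁻ x, f x ∂μ) * v + (∫⁻ x, f x ∂μ + s) * (∫⁻ y, h y ∂μ + s) := by
  have mf1 : Measurable fun p : E × E => f p.1 := mf.comp measurable_fst
  calc _ ≤ ∫⁻ p, (near.indicator (fun p => f p.1) p + (f p.1 + s) * (h p.2 + s))
          ∂(μ.prod μ) := by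
        refine lintegral_mono fun p => ?_
        by_cases hp : p ∈ near
        · rw [Set.indicator_of_mem hp]
          exact le_add_right (hnear p)
        · rw [Set.indicator_of_notMem hp, zero_add]
          exact hfar p hp
    _ = (∫⁻ p, near.indicator (fun p => f p.1) p ∂(μ.prod μ)) +
          ∫⁻ p, (f p.1 + s) * (h p.2 + s) ∂(μ.prod μ) :=
        lintegral_add_left (mf1.indicator mnear) _
    _ ≤ _ := by
        refine add_le_add ?_ (le_of_eq ?_)
        · rw [lintegral_prod _ (mf1.indicator mnear).aemeasurable, ← lintegral_mul_const _ mf]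
          refine lintegral_mono fun x => ?_
          calc _ = ∫⁻ y, {y | (x, y) ∈ near}.indicator (fun _ => f x) y ∂μ := rfl
            _ = f x * μ {y | (x, y) ∈ near} :=
              lintegral_indicator_const (measurable_prodMk_left mnear) _
            _ ≤ _ := by
              gcongr
              exact hv x
        · rw [lintegral_prod_mul (mf.add_const s).aemeasurable (mh.add_const s).aemeasurable,
            lintegral_add_left mf, lintegral_add_left mh]
          simp

lemma Model.measure_nbrCounts_le (M : Model d P) {r R : ℝ} (hr : 0 < r) (hR : 0 ≤ R)
    {i j : ℕ} (hi : 1 ≤ i) (hj : 1 ≤ j) (hij : i ≠ j) {T : Finset ℕ}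
    (hT : ∀ k ∈ T, 1 ≤ k ∧ i ≠ k ∧ j ≠ k) (K : ℕ) :
    P {ω | M.nbrCount r T i ω < K ∧ M.nbrCount r T j ω < K} ≤
      P {ω | M.nbrCount r T i ω < K} * volume (Metric.ball (0 : EuclideanSpace ℝ (Fin d)) R) +
      (P {ω | M.nbrCount r T i ω < K} +
        T.card * ENNReal.ofReal (2 * M.g (R / (2 * r)) * (M.α * r ^ d))) *
      (P {ω | M.nbrCount r T j ω < K} +
        T.card * ENNReal.ofReal (2 * M.g (R / (2 * r)) * (M.α * r ^ d))) := by
  have hprob := isProbabilityMeasure_cube M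
  set s := T.card * ENNReal.ofReal (2 * M.g (R / (2 * r)) * (M.α * r ^ d)) with hs
  set μ : Measure (EuclideanSpace ℝ (Fin d)) := volume.restrict (cube d) with hμ
  set f : EuclideanSpace ℝ (Fin d) → ENNReal :=
    fun x => P {ω | markCount T (M.nbrFst r x) (fun k => M.mark i j k ω) < K} with hf
  set h : EuclideanSpace ℝ (Fin d) → ENNReal :=
    fun y => P {ω | markCount T (M.nbrSnd r y) (fun k => M.mark i j k ω) < K} with hh
  have e1 : P {ω | M.nbrCount r T i ω < K} = ∫⁻ p, f p.1 ∂(μ.prod μ) :=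
    M.measure_nbrCounts hr hi hj hij hT (fun m _ => m < K)
  have e2 : P {ω | M.nbrCount r T j ω < K} = ∫⁻ p, h p.2 ∂(μ.prod μ) :=
    M.measure_nbrCounts hr hi hj hij hT (fun _ m => m < K)
  have mf : Measurable fun p : EuclideanSpace ℝ (Fin d) × EuclideanSpace ℝ (Fin d) => f p.1 :=
    M.measurable_measure_counts hr i j T (fun m _ => m < K)
  have mh : Measurable fun p : EuclideanSpace ℝ (Fin d) × EuclideanSpace ℝ (Fin d) => h p.2 :=
    M.measurable_measure_counts hr i j T (fun _ m => m < K)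
  have mf' : Measurable f := measurable_of_comp_diag mf
  have mh' : Measurable h := measurable_of_comp_diag mh
  have e1' : ∫⁻ p, f p.1 ∂(μ.prod μ) = ∫⁻ x, f x ∂μ := by
    rw [lintegral_prod _ mf.aemeasurable]; simp
  have e2' : ∫⁻ p, h p.2 ∂(μ.prod μ) = ∫⁻ x, h x ∂μ := by
    rw [lintegral_prod _ mh.aemeasurable]; simp
  have mnear : MeasurableSet {p : EuclideanSpace ℝ (Fin d) × EuclideanSpace ℝ (Fin d) |
      torusDist p.1 p.2 < R} := measurableSet_lt measurable_torusDist measurable_const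
  rw [M.measure_nbrCounts hr hi hj hij hT (fun a b => a < K ∧ b < K), e1, e2, e1', e2']
  have hnear : ∀ p : EuclideanSpace ℝ (Fin d) × EuclideanSpace ℝ (Fin d),
      P {ω | markCount T (M.nbrFst r p.1) (fun k => M.mark i j k ω) < K ∧
        markCount T (M.nbrSnd r p.2) (fun k => M.mark i j k ω) < K} ≤
      P {ω | markCount T (M.nbrFst r p.1) (fun k => M.mark i j k ω) < K} := by
    intro p
    refine measure_mono ?_
    intro ω hω
    exact hω.1
  refine lintegral_prod_le_of_near_far
    (ψ := fun p => P {ω | markCount T (M.nbrFst r p.1) (fun k => M.mark i j k ω) < K ∧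
      markCount T (M.nbrSnd r p.2) (fun k => M.mark i j k ω) < K})
    (near := {p | torusDist p.1 p.2 < R}) mf' mh' mnear ?_ ?_ ?_
  · intro x
    simp only [Set.mem_ofPred_eq]
    exact volume_torusDist_lt_le R x
  · intro p
    exact hnear p
  · intro p hp
    rw [Set.mem_ofPred_eq, not_lt] at hp
    exact M.measure_counts_le_of_far hr hR hi hj hij hT K hp

end PairCounts

section SecondMoment

/-- The event that vertex `i` has at most `K` neighbours among `1, …, m`. -/
def Model.lowDegree (M : Model d P) (r : ℝ) (m K i : ℕ) : Set Ω :=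
  {ω | M.nbrCount r ((Finset.Icc 1 m).erase i) i ω < K + 1}

lemma Model.measurable_nbrCount (M : Model d P) {r : ℝ} (hr : 0 < r) (T : Finset ℕ) (i : ℕ) :
    Measurable (M.nbrCount r T i) := by
  have h1 := measurable_markCount_prod T (M.measurableSet_nbrFst_prod hr)
  have h2 : Measurable fun ω => (M.X i ω, fun k => M.mark i i k ω) :=
    (M.X_meas i).prodMk (measurable_pi_lambda _ fun k => M.measurable_mark i i k)
  exact h1.comp h2

lemma Model.measurableSet_lowDegree (M : Model d P) {r : ℝ} (hr : 0 < r) (m K i : ℕ) :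
    MeasurableSet (M.lowDegree r m K i) :=
  measurableSet_lt (M.measurable_nbrCount hr _ i) measurable_const

lemma Model.nbrCount_mono (M : Model d P) (r : ℝ) {S T : Finset ℕ} (h : S ⊆ T) (i : ℕ) (ω : Ω) :
    M.nbrCount r S i ω ≤ M.nbrCount r T i ω :=
  Finset.card_le_card (Finset.filter_subset_filter _ h)

variable [IsProbabilityMeasure P]

/-- The second moment method for almost independent events. -/
lemma measureReal_biInter_compl_le {ι : Type*} (s : Finset ι) {A : ι → Set Ω}
    (hA : ∀ i ∈ s, MeasurableSet (A i)) {L τ : ℝ} (hL : 0 < L) (hs : s.Nonempty) (hτ : 0 ≤ τ)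
    (hp : ∀ i ∈ s, L ≤ P.real (A i))
    (hpair : ∀ i ∈ s, ∀ j ∈ s, i ≠ j → P.real (A i ∩ A j) ≤ (1 + τ) * P.real (A i) * P.real (A j)) :
    P.real (⋂ i ∈ s, (A i)ᶜ) ≤ 1 / (s.card * L) + τ := by
  classical
  set Y : Ω → ℝ := fun ω => ∑ i ∈ s, (A i).indicator (fun _ => (1 : ℝ)) ω with hY
  set S : ℝ := ∑ i ∈ s, P.real (A i) with hS
  have hcard : 0 < (s.card : ℝ) := by exact_mod_cast hs.card_pos
  have hSL : s.card * L ≤ S := by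
    rw [hS, ← nsmul_eq_mul]
    exact Finset.card_nsmul_le_sum _ _ _ hp
  have hcL : 0 < s.card * L := by positivity
  have hSpos : 0 < S := hcL.trans_le hSL
  have hint : ∀ i ∈ s, Integrable ((A i).indicator (fun _ => (1 : ℝ))) P := fun i hi =>
    (integrable_const 1).indicator (hA i hi)
  have hmul : ∀ i j ω, (A i).indicator (fun _ => (1 : ℝ)) ω * (A j).indicator (fun _ => (1 : ℝ)) ω
      = (A i ∩ A j).indicator (fun _ => (1 : ℝ)) ω := by
    intro i j ω
    by_cases h1 : ω ∈ A i <;> by_cases h2 : ω ∈ A j <;> simp [h1, h2]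
  have hY2 : ∀ ω, Y ω ^ 2 = ∑ i ∈ s, ∑ j ∈ s, (A i ∩ A j).indicator (fun _ => (1 : ℝ)) ω := by
    intro ω
    rw [sq, hY, Finset.sum_mul_sum]
    simp only [hmul]
  have hint2 : ∀ i ∈ s, ∀ j ∈ s, Integrable ((A i ∩ A j).indicator (fun _ => (1 : ℝ))) P :=
    fun i hi j hj => (integrable_const 1).indicator ((hA i hi).inter (hA j hj))
  have hYint : Integrable Y P := integrable_finsetSum _ hint
  have hY2int : Integrable (fun ω => Y ω ^ 2) P := by
    simp only [hY2]
    exact integrable_finsetSum _ fun i hi => integrable_finsetSum _ fun j hj => hint2 i hi j hj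
  have hEY : ∫ ω, Y ω ∂P = S := by
    rw [hY, integral_finsetSum _ hint]
    refine Finset.sum_congr rfl fun i hi => ?_
    rw [integral_indicator_const _ (hA i hi)]; simp
  have hEY2 : ∫ ω, Y ω ^ 2 ∂P ≤ S + (1 + τ) * S ^ 2 := by
    simp only [hY2]
    rw [integral_finsetSum _ fun i hi => integrable_finsetSum _ fun j hj => hint2 i hi j hj]
    have : ∀ i ∈ s, ∫ ω, ∑ j ∈ s, (A i ∩ A j).indicator (fun _ => (1 : ℝ)) ω ∂P
        ≤ P.real (A i) + (1 + τ) * P.real (A i) * S := by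
      intro i hi
      rw [integral_finsetSum _ fun j hj => hint2 i hi j hj]
      calc _ = ∑ j ∈ s, P.real (A i ∩ A j) := by
            refine Finset.sum_congr rfl fun j hj => ?_
            rw [integral_indicator_const _ ((hA i hi).inter (hA j hj))]; simp
        _ ≤ ∑ j ∈ s, ((if i = j then P.real (A i) else 0)
              + (1 + τ) * P.real (A i) * P.real (A j)) := by
            refine Finset.sum_le_sum fun j hj => ?_
            by_cases hij : i = j
            · subst hij
              simp only [Set.inter_self, if_true, le_add_iff_nonneg_right]
              positivity
            · simpa [hij] using hpair i hi j hj hij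
        _ = _ := by
            rw [Finset.sum_add_distrib, ← Finset.mul_sum]
            simp [hi, hS]
    refine (Finset.sum_le_sum this).trans (le_of_eq ?_)
    rw [Finset.sum_add_distrib, ← Finset.sum_mul, ← Finset.mul_sum]
    ring
  have hmeas : MeasurableSet (⋂ i ∈ s, (A i)ᶜ) :=
    Finset.measurableSet_biInter s fun i hi => (hA i hi).compl
  have hmain : S ^ 2 * P.real (⋂ i ∈ s, (A i)ᶜ) ≤ S + τ * S ^ 2 := by
    calc S ^ 2 * P.real (⋂ i ∈ s, (A i)ᶜ)
        = ∫ ω, (⋂ i ∈ s, (A i)ᶜ).indicator (fun _ => S ^ 2) ω ∂P := by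
          rw [integral_indicator_const _ hmeas, smul_eq_mul, mul_comm]
      _ ≤ ∫ ω, (S ^ 2 - 2 * S * Y ω + Y ω ^ 2) ∂P := by
          refine integral_mono ((integrable_const _).indicator hmeas)
            (((integrable_const _).sub (hYint.const_mul _)).add hY2int) fun ω => ?_
          by_cases hω : ω ∈ ⋂ i ∈ s, (A i)ᶜ
          · have : Y ω = 0 := by
              refine Finset.sum_eq_zero fun i hi => ?_
              have := Set.mem_iInter₂.1 hω i hi
              exact Set.indicator_of_notMem this _
            simp [Set.indicator_of_mem hω, this]
          · simp only [Set.indicator_of_notMem hω]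
            nlinarith [sq_nonneg (S - Y ω)]
      _ = S ^ 2 - 2 * S * S + ∫ ω, Y ω ^ 2 ∂P := by
          have hi : Integrable (fun ω => S ^ 2 - 2 * S * Y ω) P :=
            (integrable_const _).sub (hYint.const_mul _)
          rw [integral_add hi hY2int, integral_sub (integrable_const _) (hYint.const_mul _), integral_const_mul, hEY]
          simp
      _ ≤ _ := by nlinarith
  have h1 : P.real (⋂ i ∈ s, (A i)ᶜ) ≤ 1 / S + τ := by
    have : 1 / S + τ = (S + τ * S ^ 2) / S ^ 2 := by field_simp
    rw [this, le_div_iff₀ (by positivity), mul_comm]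
    exact hmain
  refine h1.trans ?_
  gcongr

lemma Model.real_nbrCount_erase_le (M : Model d P) {r : ℝ} (hr : 0 < r) {i j : ℕ} (hi : 1 ≤ i)
    (hj : 1 ≤ j) (hij : i ≠ j) (T : Finset ℕ) (K : ℕ) :
    P.real {ω | M.nbrCount r (T.erase j) i ω < K} ≤
      P.real {ω | M.nbrCount r T i ω < K} + M.α * r ^ d := by
  refine le_trans ?_ (add_le_add_right (M.real_joined_le hr hi hj hij) _)
  refine le_trans (measureReal_mono ?_) (measureReal_union_le _ _)
  intro ω hω
  by_contra hc
  simp only [Set.mem_union, Set.mem_ofPred_eq, not_or] at hω hc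
  refine hc.1 (lt_of_le_of_lt (Finset.card_le_card ?_) hω)
  intro k hk
  simp only [Finset.mem_filter, Finset.mem_erase] at hk ⊢
  refine ⟨⟨?_, hk.1⟩, hk.2⟩
  rintro rfl
  exact hc.2 hk.2

lemma Model.real_lowDegree_inter_le (M : Model d P) {r R : ℝ} (hr : 0 < r) (hR : 0 ≤ R)
    {m i j : ℕ} (hi : 1 ≤ i) (hj : 1 ≤ j) (hij : i ≠ j) (K : ℕ) :
    P.real (M.lowDegree r m K i ∩ M.lowDegree r m K j) ≤
      (P.real (M.lowDegree r m K i) + M.α * r ^ d) *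
        volume.real (Metric.ball (0 : EuclideanSpace ℝ (Fin d)) R) +
      (P.real (M.lowDegree r m K i) + (M.α * r ^ d +
        m * (2 * M.g (R / (2 * r)) * (M.α * r ^ d)))) *
      (P.real (M.lowDegree r m K j) + (M.α * r ^ d +
        m * (2 * M.g (R / (2 * r)) * (M.α * r ^ d)))) := by
  have hg : M.g (R / (2 * r)) ∈ Set.Icc (0 : ℝ) 1 := M.g_mem _ (by positivity)
  have ha0 : 0 ≤ M.α * r ^ d := mul_nonneg M.α_pos.le (by positivity)
  have hs0 : 0 ≤ 2 * M.g (R / (2 * r)) * (M.α * r ^ d) :=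
    mul_nonneg (mul_nonneg zero_le_two hg.1) ha0
  set T := ((Finset.Icc 1 m).erase i).erase j with hT
  have hT' : ∀ k ∈ T, 1 ≤ k ∧ i ≠ k ∧ j ≠ k := by
    intro k hk
    simp only [hT, Finset.mem_erase, Finset.mem_Icc] at hk
    omega
  have hcard : (T.card : ℝ) ≤ m := by
    have : T.card ≤ (Finset.Icc 1 m).card :=
      Finset.card_le_card ((Finset.erase_subset _ _).trans (Finset.erase_subset _ _))
    rw [Nat.card_Icc] at this
    exact_mod_cast this
  have h := M.measure_nbrCounts_le hr hR hi hj hij hT' (K + 1)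
  have h' := ENNReal.toReal_mono (by finiteness) h
  rw [ENNReal.toReal_add (by finiteness) (by finiteness), ENNReal.toReal_mul, ENNReal.toReal_mul,
    ENNReal.toReal_add (by finiteness) (by finiteness),
    ENNReal.toReal_add (by finiteness) (by finiteness), ENNReal.toReal_mul,
    ENNReal.toReal_ofReal hs0, ENNReal.toReal_natCast] at h'
  simp only [← measureReal_def] at h'
  have hqi : P.real {ω | M.nbrCount r T i ω < K + 1} ≤
      P.real (M.lowDegree r m K i) + M.α * r ^ d :=
    M.real_nbrCount_erase_le hr hi hj hij _ _
  have hqj : P.real {ω | M.nbrCount r T j ω < K + 1} ≤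
      P.real (M.lowDegree r m K j) + M.α * r ^ d := by
    rw [hT, Finset.erase_right_comm]
    exact M.real_nbrCount_erase_le hr hj hi hij.symm _ _
  calc _ ≤ P.real {ω | M.nbrCount r T i ω < K + 1 ∧ M.nbrCount r T j ω < K + 1} := by
        refine measureReal_mono ?_
        intro ω hω
        refine ⟨(M.nbrCount_mono r (Finset.erase_subset _ _) i ω).trans_lt hω.1,
          (M.nbrCount_mono r ?_ j ω).trans_lt hω.2⟩
        rw [hT, Finset.erase_right_comm]
        exact Finset.erase_subset _ _
    _ ≤ _ := h'
    _ ≤ _ := by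
        have hc := mul_le_mul_of_nonneg_right hcard hs0
        have hc0 : 0 ≤ (T.card : ℝ) * (2 * M.g (R / (2 * r)) * (M.α * r ^ d)) := by positivity
        have hpi : 0 ≤ P.real (M.lowDegree r m K i) := measureReal_nonneg
        have hpj : 0 ≤ P.real (M.lowDegree r m K j) := measureReal_nonneg
        refine add_le_add (mul_le_mul_of_nonneg_right hqi measureReal_nonneg)
          (mul_le_mul (by linarith) (by linarith) (by positivity) (by linarith))

/-- With high probability one of the first vertices has few neighbours. -/
lemma Model.real_forall_not_lowDegree_le (M : Model d P) {r R : ℝ} (hr : 0 < r) (hR : 0 ≤ R)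
    {m m' K : ℕ} (hm' : 1 ≤ m') (hmm : m' ≤ m) {L θ : ℝ} (hL : 0 < L) (hθ0 : 0 ≤ θ) (hθ1 : θ ≤ 1)
    (ha : M.α * r ^ d ≤ 1)
    (hLle : L ≤ ((m - 1).choose K : ℝ) * (M.α * r ^ d) ^ K * (1 - M.α * r ^ d) ^ (m - 1 - K))
    (hball : volume.real (Metric.ball (0 : EuclideanSpace ℝ (Fin d)) R) ≤ θ * L)
    (hsmall : M.α * r ^ d + m * (2 * M.g (R / (2 * r)) * (M.α * r ^ d)) ≤ θ * L) :
    P.real (⋂ i ∈ Finset.Icc 1 m', (M.lowDegree r m K i)ᶜ) ≤ 1 / (m' * L) + 5 * θ := by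
  have hp : ∀ i ∈ Finset.Icc 1 m', L ≤ P.real (M.lowDegree r m K i) := by
    intro i hi
    rw [Finset.mem_Icc] at hi
    have hcard : ((Finset.Icc 1 m).erase i).card = m - 1 := by
      rw [Finset.card_erase_of_mem (by rw [Finset.mem_Icc]; omega), Nat.card_Icc]; omega
    have h := M.choose_mul_le_real_nbrCount hr ha hi.1 (T := (Finset.Icc 1 m).erase i) (by
      intro k hk
      simp only [Finset.mem_erase, Finset.mem_Icc] at hk
      omega) K
    rw [hcard] at h
    exact hLle.trans h
  have h := measureReal_biInter_compl_le (P := P) (Finset.Icc 1 m')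
    (A := fun i => M.lowDegree r m K i) (fun i _ => M.measurableSet_lowDegree hr m K i) hL
    (Finset.nonempty_Icc.2 hm') (τ := 5 * θ) (by positivity) hp ?_
  · simpa using h
  · intro i hi j hj hij
    have hpi := hp i hi
    have hpj := hp j hj
    rw [Finset.mem_Icc] at hi hj
    refine (M.real_lowDegree_inter_le hr hR hi.1 hj.1 hij K).trans ?_
    have hg : M.g (R / (2 * r)) ∈ Set.Icc (0 : ℝ) 1 := M.g_mem _ (by positivity)
    have ha0 : 0 ≤ M.α * r ^ d := mul_nonneg M.α_pos.le (by positivity)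
    have hs0 : 0 ≤ m * (2 * M.g (R / (2 * r)) * (M.α * r ^ d)) :=
      mul_nonneg (Nat.cast_nonneg _) (mul_nonneg (mul_nonneg zero_le_two hg.1) ha0)
    have hv0 : 0 ≤ volume.real (Metric.ball (0 : EuclideanSpace ℝ (Fin d)) R) := measureReal_nonneg
    generalize P.real (M.lowDegree r m K i) = p at *
    generalize P.real (M.lowDegree r m K j) = q at *
    generalize m * (2 * M.g (R / (2 * r)) * (M.α * r ^ d)) = σ at *
    generalize M.α * r ^ d = a at *
    generalize volume.real (Metric.ball (0 : EuclideanSpace ℝ (Fin d)) R) = v at *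
    have hp0 : 0 ≤ p := hL.le.trans hpi
    have hq0 : 0 ≤ q := hL.le.trans hpj
    have h1 : θ * L ≤ θ * p := by gcongr
    have h2 : θ * L ≤ θ * q := by gcongr
    calc (p + a) * v + (p + (a + σ)) * (q + (a + σ))
        ≤ (p + θ * p) * (θ * q) + (p + θ * p) * (q + θ * q) := by
          refine add_le_add (mul_le_mul (by linarith) (by linarith) hv0 (by positivity))
            (mul_le_mul (by linarith) (by linarith) (by linarith) (by positivity))
      _ = (1 + 3 * θ + 2 * (θ * θ)) * (p * q) := by ring
      _ ≤ (1 + 5 * θ) * (p * q) := by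
          refine mul_le_mul_of_nonneg_right ?_ (by positivity)
          nlinarith
      _ = _ := by ring

end SecondMoment

section Tails

lemma Model.map_N (M : Model d P) (n : ℕ) : P.map (M.N n) = poissonMeasure n := by
  refine Measure.ext_of_singleton fun k => ?_
  rw [Measure.map_apply (M.N_meas n) (measurableSet_singleton k), poissonMeasure_singleton]
  have h := M.N_poisson n k
  simp only [NNReal.coe_natCast]
  exact h

lemma hasSum_poisson_mul_exp (n : ℕ) (t : ℝ) :
    HasSum (fun k : ℕ => Real.exp (-(n : ℝ)) * (n : ℝ) ^ k / k.factorial * Real.exp (t * k))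
      (Real.exp (n * (Real.exp t - 1))) := by
  have h := (NormedSpace.expSeries_div_hasSum_exp ((n : ℝ) * Real.exp t)).mul_left
    (Real.exp (-(n : ℝ)))
  rw [← Real.exp_eq_exp_ℝ, ← Real.exp_add] at h
  convert! h using 2 with k
  · rw [mul_pow, ← Real.exp_nat_mul, mul_comm t]
    ring
  · ring

lemma Model.integrable_exp_N (M : Model d P) (n : ℕ) (t : ℝ) :
    Integrable (fun ω => Real.exp (t * M.N n ω)) P := by
  have h : Integrable (fun k : ℕ => Real.exp (t * k)) (P.map (M.N n)) := by
    rw [M.map_N, integrable_poissonMeasure_iff]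
    simpa using (hasSum_poisson_mul_exp n t).summable
  exact h.comp_measurable (M.N_meas n)

lemma Model.mgf_N (M : Model d P) (n : ℕ) (t : ℝ) :
    mgf (fun ω => (M.N n ω : ℝ)) P t = Real.exp (n * (Real.exp t - 1)) := by
  have h : mgf (fun ω => (M.N n ω : ℝ)) P t = ∫ k : ℕ, Real.exp (t * k) ∂(P.map (M.N n)) := by
    rw [integral_map (M.N_meas n).aemeasurable .of_discrete]
    rfl
  rw [h, M.map_N, integral_poissonMeasure]
  simpa using (hasSum_poisson_mul_exp n t).tsum_eq

variable [IsProbabilityMeasure P]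

lemma Model.exists_real_le_N_le (M : Model d P) {η : ℝ} (hη : 0 < η) :
    ∃ q : ℝ, 0 < q ∧ ∀ n : ℕ, P.real {ω | (1 + η) * n ≤ M.N n ω} ≤ Real.exp (n * -q) := by
  set t := min 1 (η / 2) with ht
  have ht0 : 0 < t := lt_min one_pos (by positivity)
  refine ⟨t * η / 2, by positivity, fun n => ?_⟩
  have h := measure_ge_le_exp_mul_mgf (X := fun ω => (M.N n ω : ℝ)) (μ := P) ((1 + η) * n) ht0.le
    (M.integrable_exp_N n t)
  refine h.trans ?_
  rw [M.mgf_N, ← Real.exp_add, Real.exp_le_exp]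
  have h1 : Real.exp t - 1 ≤ t + t ^ 2 := by
    have := Real.abs_exp_sub_one_sub_id_le (x := t) (by rw [abs_of_pos ht0]; exact min_le_left _ _)
    linarith [le_abs_self (Real.exp t - 1 - t)]
  have h2 : t ≤ η / 2 := min_le_right _ _
  have hn : (0 : ℝ) ≤ n := Nat.cast_nonneg n
  have h3 : Real.exp t - 1 - t * (1 + η) ≤ -(t * η / 2) := by nlinarith
  nlinarith [mul_le_mul_of_nonneg_left h3 hn]

lemma Model.real_N_le_half (M : Model d P) (n : ℕ) :
    P.real {ω | (M.N n ω : ℝ) ≤ n / 2} ≤ Real.exp (n * -(1 / 16)) := by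
  have h := measure_le_le_exp_mul_mgf (X := fun ω => (M.N n ω : ℝ)) (μ := P) (n / 2 : ℝ)
    (t := -(1 / 4)) (by norm_num) (M.integrable_exp_N n _)
  refine h.trans ?_
  rw [M.mgf_N, ← Real.exp_add, Real.exp_le_exp]
  have h1 : Real.exp (-(1 / 4)) - 1 ≤ -(1 / 4) + (1 / 4) ^ 2 := by
    have := Real.abs_exp_sub_one_sub_id_le (x := -(1 / 4)) (by norm_num)
    linarith [le_abs_self (Real.exp (-(1 / 4)) - 1 - -(1 / 4))]
  have hn : (0 : ℝ) ≤ n := Nat.cast_nonneg n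
  nlinarith [mul_le_mul_of_nonneg_left h1 hn]

lemma log_factorial_le {K : ℕ} (hK : 1 ≤ K) :
    Real.log (K.factorial) ≤ (K + 1) * Real.log K - K + 1 := by
  induction K, hK using Nat.le_induction with
  | base => simp
  | succ K hK ih =>
    have hK0 : (0 : ℝ) < K := by exact_mod_cast hK
    rw [Nat.factorial_succ]
    push_cast
    rw [Real.log_mul (by positivity) (by positivity)]
    have h := Real.one_sub_inv_le_log_of_pos (x := (K + 1) / K) (by positivity)
    rw [Real.log_div (by positivity) (by positivity), inv_div] at h
    have h2 : 1 ≤ (K + 1) * (Real.log (K + 1) - Real.log K) := by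
      calc (1 : ℝ) = (K + 1) * (1 - K / (K + 1)) := by field_simp; ring
        _ ≤ _ := by gcongr
    nlinarith

/-- A lower bound for the logarithm of a binomial weight. -/
lemma exp_le_choose_mul {m K : ℕ} {a : ℝ} (hK : 1 ≤ K) (hKm : K < m) (ha0 : 0 < a) (ha1 : a < 1) :
    Real.exp (K * Real.log ((m - K) * a) - ((K + 1) * Real.log K - K + 1) - m * a / (1 - a)) ≤
      ((m - 1).choose K : ℝ) * a ^ K * (1 - a) ^ (m - 1 - K) := by
  have hmK : (0 : ℝ) < m - K := by
    rw [sub_pos]; exact_mod_cast hKm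
  have h1 : ((m - K : ℝ)) ^ K / K.factorial ≤ ((m - 1).choose K : ℝ) := by
    have := Nat.pow_le_choose (α := ℝ) K (m - 1)
    have e : m - 1 + 1 - K = m - K := by omega
    rw [e] at this
    push_cast [Nat.cast_sub hKm.le] at this
    exact this
  have h2 : Real.exp (-((K + 1) * Real.log K - K + 1)) ≤ 1 / K.factorial := by
    rw [Real.exp_neg, one_div]
    refine inv_anti₀ (by positivity) ?_
    rw [← Real.log_le_iff_le_exp (by positivity)]
    exact log_factorial_le hK
  have h3 : Real.exp (-(m * a / (1 - a))) ≤ (1 - a) ^ (m - 1 - K) := by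
    have h1a : 0 < 1 - a := by linarith
    have h := Real.one_sub_inv_le_log_of_pos h1a
    have h4 : 1 - (1 - a)⁻¹ = -(a / (1 - a)) := by field_simp; ring
    calc Real.exp (-(m * a / (1 - a))) = Real.exp (m * -(a / (1 - a))) := by
          congr 1; ring
      _ ≤ Real.exp (m * Real.log (1 - a)) := by
          rw [Real.exp_le_exp]; rw [h4] at h; gcongr
      _ = (1 - a) ^ m := by rw [Real.exp_nat_mul, Real.exp_log h1a]
      _ ≤ _ := pow_le_pow_of_le_one h1a.le (by linarith) (by omega)
  rw [sub_eq_add_neg, sub_eq_add_neg, Real.exp_add, Real.exp_add, Real.exp_nat_mul,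
    Real.exp_log (by positivity)]
  calc _ ≤ ((m - K) * a) ^ K * (1 / K.factorial) * (1 - a) ^ (m - 1 - K) := by gcongr
    _ = ((m - K : ℝ)) ^ K / K.factorial * a ^ K * (1 - a) ^ (m - 1 - K) := by
        rw [mul_pow]; ring
    _ ≤ _ := by
        have h1a : 0 ≤ 1 - a := by linarith
        gcongr

end Tails

section Asymptotics

open Topology

lemma eventually_const_mul_log_le_rpow (C : ℝ) {s : ℝ} (hs : 0 < s) :
    ∀ᶠ x : ℝ in atTop, C * Real.log x ≤ x ^ s := by
  have h := (isLittleO_log_rpow_atTop hs).const_mul_left C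
  filter_upwards [h.bound one_pos, eventually_ge_atTop 0] with x hx hx0
  rw [one_mul, Real.norm_of_nonneg (Real.rpow_nonneg hx0 s)] at hx
  exact (le_abs_self _).trans hx

/-- The binomial weight at `κ log n`, for about `μ n` trials with success probability
`γ log n / n`, decays no faster than the exponent given by the Poisson large deviation rate. -/
lemma eventually_rpow_le_choose_mul {n m : ℕ → ℕ} (hn : Tendsto n atTop atTop) {μ γ κ β : ℝ}
    (hμ : 0 < μ) (hγ : 0 < γ) (hκ : 0 < κ)
    (hm : Tendsto (fun k => (m k : ℝ) / n k) atTop (𝓝 μ))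
    (hβ : γ * μ - κ + κ * Real.log (κ / (γ * μ)) < β) :
    ∀ᶠ k in atTop, ((n k : ℝ)) ^ (-β) ≤
      ((m k - 1).choose ⌊κ * Real.log (n k)⌋₊ : ℝ) *
        (γ * Real.log (n k) / n k) ^ ⌊κ * Real.log (n k)⌋₊ *
        (1 - γ * Real.log (n k) / n k) ^ (m k - 1 - ⌊κ * Real.log (n k)⌋₊) := by
  have hnR : Tendsto (fun k => (n k : ℝ)) atTop atTop := tendsto_natCast_atTop_atTop.comp hn
  set l : ℕ → ℝ := fun k => Real.log (n k) with hl_def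
  set K : ℕ → ℕ := fun k => ⌊κ * l k⌋₊ with hK_def
  set a : ℕ → ℝ := fun k => γ * l k / n k with ha_def
  have hl : Tendsto l atTop atTop := Real.tendsto_log_atTop.comp hnR
  have hln : Tendsto (fun k => l k / n k) atTop (𝓝 0) :=
    (Real.isLittleO_log_id_atTop.tendsto_div_nhds_zero).comp hnR
  have ha : Tendsto a atTop (𝓝 0) := by
    have := hln.const_mul γ
    rw [mul_zero] at this
    exact this.congr fun k => (mul_div_assoc _ _ _).symm
  have hKl : Tendsto (fun k => (K k : ℝ) / l k) atTop (𝓝 κ) :=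
    (tendsto_nat_floor_mul_div_atTop hκ.le).comp hl
  have hKinf : Tendsto K atTop atTop :=
    tendsto_nat_floor_atTop.comp (hl.const_mul_atTop hκ)
  have hKR : Tendsto (fun k => (K k : ℝ)) atTop atTop := tendsto_natCast_atTop_atTop.comp hKinf
  have hlogK : Tendsto (fun k => Real.log (K k) / K k) atTop (𝓝 0) :=
    (Real.isLittleO_log_id_atTop.tendsto_div_nhds_zero).comp hKR
  have hlpos : ∀ᶠ k in atTop, 0 < l k := hl.eventually_gt_atTop 0
  have hnpos : ∀ᶠ k in atTop, (0 : ℝ) < n k := hnR.eventually_gt_atTop 0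
  have hKn : Tendsto (fun k => (K k : ℝ) / n k) atTop (𝓝 0) := by
    have := hKl.mul hln
    rw [mul_zero] at this
    refine this.congr' ?_
    filter_upwards [hlpos] with k hk
    field_simp
  have hy : Tendsto (fun k => γ * ((m k : ℝ) / n k - K k / n k)) atTop (𝓝 (γ * μ)) := by
    simpa using (hm.sub hKn).const_mul γ
  have hE : Tendsto (fun k => (K k : ℝ) / l k *
        (Real.log (γ * ((m k : ℝ) / n k - K k / n k)) - Real.log (K k / l k))
      - Real.log (K k) / K k * (K k / l k) + K k / l k - 1 / l k
      - γ * (m k / n k) / (1 - a k)) atTop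
      (𝓝 (κ * (Real.log (γ * μ) - Real.log κ) - 0 * κ + κ - 0 - γ * μ / (1 - 0))) := by
    refine ((((hKl.mul ((hy.log (by positivity)).sub (hKl.log hκ.ne'))).sub
      (hlogK.mul hKl)).add hKl).sub ?_).sub ((hm.const_mul γ).div (ha.const_sub 1) (by norm_num))
    simp only [one_div]
    exact hl.inv_tendsto_atTop
  have hlim : -β < κ * (Real.log (γ * μ) - Real.log κ) - 0 * κ + κ - 0 - γ * μ / (1 - 0) := by
    rw [Real.log_div hκ.ne' (by positivity)] at hβ
    simp only [sub_zero, div_one, zero_mul]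
    linarith
  have hmK : ∀ᶠ k in atTop, 0 < (m k : ℝ) / n k - K k / n k :=
    (hm.sub hKn).eventually_const_lt (by simpa using hμ)
  filter_upwards [hlpos, hnpos, hE.eventually_const_lt hlim, hmK, ha.eventually_lt_const one_pos,
    hKinf.eventually_ge_atTop 1] with k hlk hnk hEk hmKk hak hKk
  have hK0 : (0 : ℝ) < K k := by exact_mod_cast hKk
  have hKm : K k < m k := by
    rw [← sub_div, div_pos_iff_of_pos_right hnk, sub_pos] at hmKk
    exact_mod_cast hmKk
  refine le_trans ?_ (exp_le_choose_mul hKk hKm (by positivity) hak)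
  rw [Real.rpow_def_of_pos hnk, Real.exp_le_exp]
  have hyk : ((m k : ℝ) - K k) * a k = γ * ((m k : ℝ) / n k - K k / n k) * l k := by
    simp only [ha_def]
    field_simp
  change l k * -β ≤ K k * Real.log (((m k : ℝ) - K k) * a k) - ((K k + 1) * Real.log (K k) - K k + 1)
    - m k * a k / (1 - a k)
  have h1a : 0 < 1 - a k := sub_pos.2 hak
  rw [hyk, Real.log_mul (by positivity) hlk.ne']
  rw [Real.log_div hK0.ne' hlk.ne'] at hEk
  refine (mul_le_mul_of_nonneg_left hEk.le hlk.le).trans (le_of_eq ?_)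
  have e : (m k : ℝ) * a k = γ * (m k / n k) * l k := by
    simp only [ha_def]
    field_simp
  rw [e]
  field_simp
  ring

end Asymptotics

section Rate

open Topology

lemma strictConvexOn_H : StrictConvexOn ℝ (Set.Ici 0) H := by
  have h : ConvexOn ℝ (Set.Ici (0 : ℝ)) fun x : ℝ => 1 - x :=
    (convexOn_const (1 : ℝ) (convex_Ici 0)).sub (concaveOn_id (convex_Ici 0))
  exact h.add_strictConvexOn Real.strictConvexOn_mul_log

lemma H_one : H 1 = 0 := by simp [H]

lemma exists_H_lt {y x₀ : ℝ} (hy : 0 < y) (h : Hminusinv y < x₀) :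
    ∃ x, 0 < x ∧ x ≤ x₀ ∧ H x < y := by
  obtain ⟨x, ⟨hx0, hHx⟩, hxx₀⟩ := exists_lt_of_csInf_lt
    (s := {x : ℝ | 0 ≤ x ∧ H x ≤ y}) ⟨1, zero_le_one, H_one.trans_le hy.le⟩ h
  rcases lt_or_ge x 1 with hx1 | hx1
  · obtain ⟨z, hxz, hz⟩ := exists_between (lt_min hxx₀ hx1)
    have hz1 : z < 1 := hz.trans_le (min_le_right _ _)
    refine ⟨z, hx0.trans_lt hxz, (hz.trans_le (min_le_left _ _)).le, ?_⟩
    have h1x : 0 < 1 - x := sub_pos.2 hx1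
    have hab : (1 - z) / (1 - x) + (z - x) / (1 - x) = 1 := by field_simp; ring
    have key := strictConvexOn_H.2 (Set.mem_Ici.2 hx0) (Set.mem_Ici.2 zero_le_one) hx1.ne
      (div_pos (by linarith : 0 < 1 - z) h1x) (div_pos (by linarith : 0 < z - x) h1x) hab
    have e : ((1 - z) / (1 - x)) • x + ((z - x) / (1 - x)) • (1 : ℝ) = z := by
      simp only [smul_eq_mul]; field_simp; ring
    rw [e, H_one, smul_zero, add_zero, smul_eq_mul] at key
    have h2 : (1 - z) / (1 - x) ≤ 1 := by rw [div_le_one h1x]; linarith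
    have h3 : 0 ≤ (1 - z) / (1 - x) := div_nonneg (by linarith) h1x.le
    calc H z < (1 - z) / (1 - x) * H x := key
      _ ≤ (1 - z) / (1 - x) * y := by gcongr
      _ ≤ 1 * y := by gcongr
      _ = y := one_mul y
  · exact ⟨1, one_pos, hx1.trans hxx₀.le, H_one.trans_lt hy⟩

lemma exists_rate_lt {β γ κ₀ : ℝ} (hβ : 0 < β) (hγ : 0 < γ) (h : γ * Hminusinv (β / γ) < κ₀) :
    ∃ κ η : ℝ, 0 < κ ∧ κ ≤ κ₀ ∧ 0 < η ∧
      γ * (1 + η) - κ + κ * Real.log (κ / (γ * (1 + η))) < β := by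
  obtain ⟨x, hx0, hx, hH⟩ := exists_H_lt (div_pos hβ hγ) ((lt_div_iff₀' hγ).2 h)
  rw [le_div_iff₀' hγ] at hx
  have hcont : ContinuousAt
      (fun η : ℝ => γ * (1 + η) - γ * x + γ * x * Real.log (γ * x / (γ * (1 + η)))) 0 := by
    have h1 : ContinuousAt (fun η : ℝ => γ * (1 + η)) 0 := by fun_prop
    refine (h1.sub continuousAt_const).add (continuousAt_const.mul ?_)
    refine (continuousAt_const.div h1 (by simpa using hγ.ne')).log ?_
    simp [hγ.ne', hx0.ne']
  have h0 : γ * (1 + 0) - γ * x + γ * x * Real.log (γ * x / (γ * (1 + 0))) < β := by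
    rw [lt_div_iff₀' hγ] at hH
    rw [add_zero, mul_one, mul_div_cancel_left₀ x hγ.ne']
    unfold H at hH
    linarith
  have hev := (hcont.eventually_lt continuousAt_const h0).filter_mono
    (nhdsWithin_le_nhds (s := Set.Ioi (0 : ℝ)))
  obtain ⟨η, hη, hη0⟩ := (hev.and self_mem_nhdsWithin).exists
  exact ⟨γ * x, η, by positivity, hx, hη0, hη⟩

lemma Model.alpha_mul_rhat_pow (M : Model d P) (hd : d ≠ 0) {γ : ℝ} (hγ : 0 ≤ γ) (n : ℕ) :
    M.α * rhat M γ n ^ d = γ * Real.log n / n := by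
  have hα := M.α_pos
  have h : (0 : ℝ) ≤ γ * Real.log n / (M.α * n) :=
    div_nonneg (mul_nonneg hγ (Real.log_natCast_nonneg n)) (by positivity)
  rw [rhat, one_div, Real.rpow_inv_natCast_pow h hd]
  rcases eq_or_ne n 0 with rfl | hn
  · simp
  · field_simp

variable [IsProbabilityMeasure P]

lemma Model.eventually_real_forall_not_lowDegree_le (hd : d ≠ 0) (M : Model d P)
    {c : ℝ} (hc : (3 : ℝ) * d < c) (hg : M.g =o[atTop] fun r : ℝ => r ^ (-c))
    {γ κ μ : ℝ} (hγ : 0 < γ) (hκ : 0 < κ) (hμ : 0 < μ) {n m : ℕ → ℕ}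
    (hn : Tendsto n atTop atTop) (hnm : ∀ k, n k ≤ m k)
    (hm : Tendsto (fun k => (m k : ℝ) / n k) atTop (𝓝 μ))
    (hrate : γ * μ - κ + κ * Real.log (κ / (γ * μ)) < (c - 3 * d) / (c - d)) :
    ∀ᶠ k in atTop, P.real (⋂ i ∈ Finset.Icc 1 (n k / 2),
        (M.lowDegree (rhat M γ (n k)) (m k) ⌊κ * Real.log (n k)⌋₊ i)ᶜ) ≤
      9 * (n k : ℝ) ^ (-(d / (2 * (c - d)))) := by
  have hd0 : (0 : ℝ) < d := by positivity
  have hcd : 0 < c - d := by linarith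
  set δ : ℝ := d / (2 * (c - d)) with hδ
  have hδ0 : 0 < δ := by positivity
  have hβ : (c - 3 * d) / (c - d) = 1 - 4 * δ := by rw [hδ]; field_simp; ring
  have hβ0 : δ < 1 / 4 := by
    rw [hδ, div_lt_iff₀ (by positivity)]; linarith
  rw [hβ] at hrate
  set ε : ℝ := 1 / (c - d) with hε
  have hε0 : 0 < ε := by positivity
  have hdε : ε * d = 2 * δ := by rw [hδ, hε]; field_simp
  have hcε : ε * -c = -(1 + 2 * δ) := by rw [hδ, hε]; field_simp; ring
  have hα := M.α_pos
  have hnR : Tendsto (fun k => (n k : ℝ)) atTop atTop := tendsto_natCast_atTop_atTop.comp hn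
  have hgR : ∀ᶠ x : ℝ in atTop, M.g (x ^ ε / 2) ≤ 2 ^ c * x ^ (-1 : ℝ) := by
    have ht : Tendsto (fun x : ℝ => x ^ ε / 2) atTop atTop :=
      (tendsto_rpow_atTop hε0).atTop_div_const two_pos
    filter_upwards [ht.eventually (hg.bound one_pos), eventually_ge_atTop 1] with x hx hx1
    have hx0 : 0 < x := by linarith
    have h1 : (x ^ ε / 2) ^ (-c) = 2 ^ c * x ^ (-(1 + 2 * δ)) := by
      rw [Real.div_rpow (by positivity) (by norm_num), ← Real.rpow_mul hx0.le, hcε,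
        Real.rpow_neg two_pos.le, div_inv_eq_mul, mul_comm]
    rw [one_mul, Real.norm_of_nonneg (by positivity : (0 : ℝ) ≤ (x ^ ε / 2) ^ (-c)), h1] at hx
    refine (le_abs_self _).trans (hx.trans ?_)
    gcongr
    linarith
  have hvol : ∀ R : ℝ, 0 ≤ R → volume.real (Metric.ball (0 : EuclideanSpace ℝ (Fin d)) R) =
      R ^ d * volume.real (Metric.ball (0 : EuclideanSpace ℝ (Fin d)) 1) := fun R hR => by
    have : Nonempty (Fin d) := ⟨⟨0, Nat.pos_of_ne_zero hd⟩⟩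
    rw [Measure.real, Measure.addHaar_ball _ _ hR, finrank_euclideanSpace_fin, ENNReal.toReal_mul,
      ENNReal.toReal_ofReal (by positivity), Measure.real]
  set v : ℝ := volume.real (Metric.ball (0 : EuclideanSpace ℝ (Fin d)) 1) with hv
  filter_upwards [eventually_rpow_le_choose_mul hn hμ hγ hκ hm hrate,
    hnR.eventually (eventually_const_mul_log_le_rpow (γ / M.α * v) hδ0),
    hnR.eventually (eventually_const_mul_log_le_rpow
      (γ * (1 + 2 * (μ + 1) * 2 ^ c)) (by positivity : 0 < 3 * δ)),
    hnR.eventually (eventually_const_mul_log_le_rpow γ one_pos),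
    hnR.eventually hgR, hnR.eventually_ge_atTop 2,
    hm.eventually_lt_const (lt_add_one μ)] with k hL hball hsmall ha hgk hn2 hmk
  have hn0 : (0 : ℝ) < n k := by linarith
  have hn2' : 2 ≤ n k := by exact_mod_cast hn2
  have hn1 : (1 : ℝ) < n k := by linarith
  have hl0 : 0 < Real.log (n k) := Real.log_pos hn1
  set N : ℝ := (n k : ℝ) with hN
  have har := M.alpha_mul_rhat_pow hd hγ.le (n k)
  rw [← hN] at har
  have hr0 : 0 < rhat M γ (n k) := by unfold rhat; positivity
  have hθL : N ^ (-δ) * N ^ (-(1 - 4 * δ)) = N ^ (3 * δ) / N := by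
    rw [← Real.rpow_add hn0, ← Real.rpow_sub_one hn0.ne']
    congr 1; ring
  have hmain := M.real_forall_not_lowDegree_le (r := rhat M γ (n k))
    (R := rhat M γ (n k) * N ^ ε) hr0 (by positivity) (m := m k) (m' := n k / 2)
    (K := ⌊κ * Real.log N⌋₊) (by omega) ((Nat.div_le_self _ _).trans (hnm k))
    (L := N ^ (-(1 - 4 * δ))) (θ := N ^ (-δ)) (by positivity) (by positivity)
    (Real.rpow_le_one_of_one_le_of_nonpos hn1.le (by linarith))
    (by rw [har, div_le_one hn0]; simpa using ha) (by rw [har]; exact hL) ?_ ?_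
  · refine hmain.trans ?_
    have h4 : N / 4 ≤ (n k / 2 : ℕ) := by
      have : (n k : ℝ) ≤ (4 * (n k / 2) : ℕ) := by exact_mod_cast (by omega : n k ≤ 4 * (n k / 2))
      push_cast at this
      linarith
    have h5 : 1 / ((n k / 2 : ℕ) * N ^ (-(1 - 4 * δ))) ≤ 4 * N ^ (-δ) := by
      calc 1 / ((n k / 2 : ℕ) * N ^ (-(1 - 4 * δ))) ≤ 1 / (N / 4 * N ^ (-(1 - 4 * δ))) := by gcongr
        _ = 4 * N ^ (-(4 * δ)) := by
            have : N * N ^ (-(1 - 4 * δ)) = N ^ (4 * δ) := by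
              rw [← Real.rpow_one_add' hn0.le (by linarith)]; congr 1; ring
            rw [div_mul_eq_mul_div, this, Real.rpow_neg hn0.le]
            field_simp
        _ ≤ 4 * N ^ (-δ) := by
            gcongr
            · exact hn1.le
            · linarith
    linarith
  · rw [hθL, hvol _ (by positivity), mul_pow, ← Real.rpow_mul_natCast hn0.le, hdε]
    have e : rhat M γ (n k) ^ d = γ / M.α * Real.log N / N := by
      rw [eq_div_iff hn0.ne', div_mul_eq_mul_div, eq_div_iff hα.ne']
      rw [eq_div_iff hn0.ne'] at har
      linarith
    have e3 : N ^ (3 * δ) = N ^ δ * N ^ (2 * δ) := by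
      rw [← Real.rpow_add hn0]; congr 1; ring
    rw [e, e3]
    calc γ / M.α * Real.log N / N * N ^ (2 * δ) * v
        = (γ / M.α * v * Real.log N) * N ^ (2 * δ) / N := by ring
      _ ≤ _ := by gcongr
  · rw [hθL, har]
    have e : rhat M γ (n k) * N ^ ε / (2 * rhat M γ (n k)) = N ^ ε / 2 := by field_simp
    have hg0 : 0 ≤ M.g (N ^ ε / 2) := (M.g_mem _ (by positivity)).1
    rw [e]
    have h6 : (m k : ℝ) * M.g (N ^ ε / 2) ≤ (μ + 1) * 2 ^ c := by
      rw [div_lt_iff₀ hn0] at hmk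
      calc (m k : ℝ) * M.g (N ^ ε / 2) ≤ ((μ + 1) * N) * (2 ^ c * N ^ (-1 : ℝ)) := by gcongr
        _ = _ := by rw [Real.rpow_neg_one]; field_simp
    calc γ * Real.log N / N + m k * (2 * M.g (N ^ ε / 2) * (γ * Real.log N / N))
        = γ * Real.log N / N * (1 + 2 * (m k * M.g (N ^ ε / 2))) := by ring
      _ ≤ γ * Real.log N / N * (1 + 2 * ((μ + 1) * 2 ^ c)) := by gcongr
      _ = γ * (1 + 2 * (μ + 1) * 2 ^ c) * Real.log N / N := by ring
      _ ≤ _ := by gcongr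

end Rate

section AlmostSure

open Topology

lemma Model.minDeg_le_of_mem_lowDegree (M : Model d P) {j m K i : ℕ} {r s : ℝ} (hs : 0 < s)
    (hsr : s ≤ r) {ω : Ω} (hm : M.N j ω ≤ m) (hi : 1 ≤ i) (hiN : i ≤ M.N j ω)
    (hlow : ω ∈ M.lowDegree r m K i) : minDeg M j s ω ≤ K := by
  classical
  have hdeg : deg M j s ω i ≤ M.nbrCount r ((Finset.Icc 1 m).erase i) i ω := by
    unfold deg Model.nbrCount
    rw [← Set.ncard_coe_finset]
    refine Set.ncard_le_ncard ?_ (Finset.finite_toSet _)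
    rintro k ⟨hik, -, hk1, -, hkN, hU⟩
    rw [Finset.mem_coe, Finset.mem_filter, Finset.mem_erase, Finset.mem_Icc]
    have h0 : 0 ≤ torusDist (M.X i ω) (M.X k ω) := torusDist_nonneg _ _
    refine ⟨⟨hik.symm, hk1, hkN.trans hm⟩, hU.trans (M.g_antitone ?_ ?_ ?_)⟩
    · exact div_nonneg h0 (hs.le.trans hsr)
    · exact div_nonneg h0 hs.le
    · gcongr
  have hmin : minDeg M j s ω ≤ deg M j s ω i := Nat.sInf_le ⟨i, hi, hiN, rfl⟩
  exact hmin.trans (hdeg.trans (Nat.lt_succ_iff.1 hlow))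

lemma Model.rhat_pos (M : Model d P) {γ : ℝ} (hγ : 0 < γ) {n : ℕ} (hn : 2 ≤ n) :
    0 < rhat M γ n := by
  have hα := M.α_pos
  have h1 : (1 : ℝ) < n := by exact_mod_cast hn
  have hl := Real.log_pos h1
  unfold rhat
  positivity

lemma Model.rhat_le_rhat (M : Model d P) {γ : ℝ} (hγ : 0 ≤ γ) {n j : ℕ} (hn : 3 ≤ n)
    (hnj : n ≤ j) : rhat M γ j ≤ rhat M γ n := by
  have hα := M.α_pos
  have he : ∀ {i : ℕ}, 3 ≤ i → Real.exp 1 ≤ i := fun hi =>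
    Real.exp_one_lt_three.le.trans (by exact_mod_cast hi)
  have h := Real.log_div_self_antitoneOn (he hn) (he (hn.trans hnj)) (Nat.cast_le.2 hnj)
  unfold rhat
  refine Real.rpow_le_rpow (div_nonneg (mul_nonneg hγ (Real.log_natCast_nonneg j)) (by positivity))
    ?_ (by positivity)
  rw [mul_div_mul_comm, mul_div_mul_comm]
  gcongr

lemma exists_pow_le_lt_pow {b : ℕ} (hb : b ≠ 0) (j : ℕ) : ∃ k : ℕ, k ^ b ≤ j ∧ j < (k + 1) ^ b := by
  have hex : ∃ k : ℕ, j < (k + 1) ^ b := ⟨j, (Nat.lt_succ_self j).trans_le (Nat.le_self_pow hb _)⟩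
  refine ⟨Nat.find hex, ?_, Nat.find_spec hex⟩
  rcases h : Nat.find hex with _ | k
  · simp [hb]
  · exact not_lt.1 (Nat.find_min hex (h ▸ Nat.lt_succ_self k))

lemma tendsto_natCeil_mul_succ_pow_div (b : ℕ) (hb : b ≠ 0) {μ : ℝ} (hμ : 0 ≤ μ) :
    Tendsto (fun k : ℕ => (⌈μ * ((k + 1) ^ b : ℕ)⌉₊ : ℝ) / ((k ^ b : ℕ) : ℝ)) atTop (𝓝 μ) := by
  have hs : Tendsto (fun k : ℕ => (((k + 1) ^ b : ℕ) : ℝ)) atTop atTop :=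
    tendsto_natCast_atTop_atTop.comp ((tendsto_pow_atTop hb).comp (tendsto_add_atTop_nat 1))
  have h1 := (tendsto_nat_ceil_mul_div_atTop hμ).comp hs
  have h2 : Tendsto (fun k : ℕ => (1 + 1 / (k : ℝ)) ^ b) atTop (𝓝 1) := by
    simpa using (tendsto_one_div_atTop_nhds_zero_nat.const_add (1 : ℝ)).pow b
  have h3 := h1.mul h2
  rw [mul_one] at h3
  refine h3.congr' ?_
  filter_upwards [eventually_gt_atTop 0] with k hk
  have hk0 : (0 : ℝ) < k := by exact_mod_cast hk
  have e : 1 + 1 / (k : ℝ) = (k + 1) / k := by field_simp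
  simp only [Function.comp_apply]
  rw [e, div_pow]
  push_cast
  field_simp

lemma ae_eventually_notMem_of_real_le [IsFiniteMeasure P] {s : ℕ → Set Ω} {u : ℕ → ℝ}
    (hu : Summable u) (h : ∀ᶠ k in atTop, P.real (s k) ≤ u k) :
    ∀ᵐ ω ∂P, ∀ᶠ k in atTop, ω ∉ s k := by
  have hs : Summable fun k => P.real (s k) := by
    refine hu.of_norm_bounded_eventually_nat (h.mono fun k hk => ?_)
    rwa [Real.norm_of_nonneg measureReal_nonneg]
  refine ae_eventually_notMem ?_
  simpa using hs.tsum_ofReal_ne_top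

variable [IsProbabilityMeasure P]

lemma Model.ae_eventually_minDeg_le (hd : d ≠ 0) (M : Model d P)
    {c : ℝ} (hc : (3 : ℝ) * d < c) (hg : M.g =o[atTop] fun r : ℝ => r ^ (-c))
    {γ κ₀ : ℝ} (hγ : 0 < γ) (hκ₀ : γ * Hminusinv ((c - 3 * d) / (γ * (c - d))) < κ₀) :
    ∀ᵐ ω ∂P, ∀ᶠ j : ℕ in atTop, (minDeg M j (rhat M γ j) ω : ℝ) ≤ κ₀ * Real.log j := by
  have hd0 : (0 : ℝ) < d := by positivity
  have hcd : 0 < c - d := by linarith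
  have hβ : 0 < (c - 3 * d) / (c - d) := div_pos (by linarith) hcd
  rw [mul_comm γ (c - d), ← div_div] at hκ₀
  obtain ⟨κ, η, hκ, hκκ₀, hη, hrate⟩ := exists_rate_lt hβ hγ hκ₀
  set δ : ℝ := d / (2 * (c - d)) with hδ
  have hδ0 : 0 < δ := by positivity
  obtain ⟨b, hb⟩ := exists_nat_gt (1 / δ)
  have hbδ : 1 < b * δ := (div_lt_iff₀ hδ0).1 hb
  have hb0 : b ≠ 0 := by
    rintro rfl
    norm_num at hbδ
  have hk_le : ∀ k : ℕ, k ≤ k ^ b := fun k => Nat.le_self_pow hb0 k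
  have hlt : ∀ k : ℕ, k ^ b ≤ (k + 1) ^ b := fun k => Nat.pow_le_pow_left (Nat.le_succ k) b
  set m : ℕ → ℕ := fun k => ⌈(1 + η) * ((k + 1) ^ b : ℕ)⌉₊ with hm
  have hnm : ∀ k, k ^ b ≤ m k := fun k => by
    have h1 : (((k + 1) ^ b : ℕ) : ℝ) ≤ m k := by
      refine le_trans ?_ (Nat.le_ceil _)
      exact le_mul_of_one_le_left (Nat.cast_nonneg _) (by linarith)
    exact (hlt k).trans (by exact_mod_cast h1)
  obtain ⟨q, hq, hNq⟩ := M.exists_real_le_N_le hη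
  have hexp : ∀ {p : ℝ}, 0 < p → ∀ {k n : ℕ}, k ≤ n → Real.exp (n * -p) ≤ Real.exp (k * -p) := by
    intro p hp k n hkn
    rw [Real.exp_le_exp]
    have : (k : ℝ) ≤ n := by exact_mod_cast hkn
    nlinarith
  have hsum : ∀ {p : ℝ}, 0 < p → Summable fun k : ℕ => Real.exp (k * -p) := fun hp =>
    Real.summable_exp_nat_mul_iff.2 (by linarith)
  have hA := ae_eventually_notMem_of_real_le (P := P) (u := fun k : ℕ => 9 * (k : ℝ) ^ (-(b * δ)))
    ((Real.summable_nat_rpow.2 (by linarith)).mul_left 9)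
    ((M.eventually_real_forall_not_lowDegree_le hd hc hg hγ hκ (by linarith : 0 < 1 + η)
      (tendsto_pow_atTop hb0) hnm (tendsto_natCeil_mul_succ_pow_div b hb0 (by linarith))
      hrate).mono fun k hk => hk.trans (le_of_eq (by
        rw [← hδ, Nat.cast_pow, ← Real.rpow_natCast, ← Real.rpow_mul (Nat.cast_nonneg k),
          mul_neg])))
  have hB := ae_eventually_notMem_of_real_le (P := P) (hsum hq) (Eventually.of_forall fun k =>
    (hNq ((k + 1) ^ b)).trans (hexp hq ((hk_le k).trans (hlt k))))
  have hC := ae_eventually_notMem_of_real_le (P := P) (hsum (by norm_num : (0 : ℝ) < 1 / 16))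
    (Eventually.of_forall fun k => (M.real_N_le_half (k ^ b)).trans (hexp (by norm_num) (hk_le k)))
  filter_upwards [hA, hB, hC] with ω hAω hBω hCω
  obtain ⟨k₀, hk₀⟩ := eventually_atTop.1 (hAω.and (hBω.and (hCω.and (eventually_ge_atTop 3))))
  filter_upwards [eventually_ge_atTop (k₀ ^ b)] with j hj
  obtain ⟨k, hkj, hjk⟩ := exists_pow_le_lt_pow hb0 j
  have hk : k₀ ≤ k := Nat.lt_succ_iff.1 (lt_of_pow_lt_pow_left₀ b (Nat.zero_le _)
    (hj.trans_lt hjk))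
  obtain ⟨h1, h2, h3, h4⟩ := hk₀ k hk
  have hn3 : 3 ≤ k ^ b := h4.trans (hk_le k)
  simp only [Set.mem_iInter, Set.mem_compl_iff, not_forall, not_not] at h1
  obtain ⟨i, hi, hlow⟩ := h1
  rw [Finset.mem_Icc] at hi
  simp only [not_le] at h2 h3
  have hNm : M.N j ω ≤ m k := by
    refine (M.N_mono ω hjk.le).trans ?_
    exact_mod_cast h2.le.trans (Nat.le_ceil _)
  have hiN : i ≤ M.N j ω := by
    refine le_trans ?_ (M.N_mono ω hkj)
    have : (i : ℝ) ≤ ((k ^ b : ℕ) : ℝ) / 2 := (Nat.cast_le.2 hi.2).trans Nat.cast_div_le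
    exact_mod_cast this.trans h3.le
  have hmin := M.minDeg_le_of_mem_lowDegree (M.rhat_pos hγ (by omega : 2 ≤ j))
    (M.rhat_le_rhat hγ.le hn3 hkj) hNm hi.1 hiN hlow
  have hlog0 : 0 ≤ Real.log ((k ^ b : ℕ) : ℝ) := Real.log_natCast_nonneg _
  calc (minDeg M j (rhat M γ j) ω : ℝ) ≤ (⌊κ * Real.log ((k ^ b : ℕ) : ℝ)⌋₊ : ℝ) := by
        exact_mod_cast hmin
    _ ≤ κ * Real.log ((k ^ b : ℕ) : ℝ) := Nat.floor_le (by positivity)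
    _ ≤ κ₀ * Real.log j := by
        have := hκ.le.trans hκκ₀
        gcongr

end AlmostSure

/-- Theorem 4(iv): for `γ > (c-3d)/(c-d)`, a.s.
`limsup δ_n/log n ≤ γ H₋⁻¹((c-3d)/(γ(c-d)))`. -/
theorem minDeg_limsup_le (hd : 2 ≤ d) [IsProbabilityMeasure P] (M : Model d P)
    {c : ℝ} (hc : (3 : ℝ) * d < c)
    (hg : M.g =o[atTop] fun r : ℝ => r ^ (-c))
    {γ : ℝ} (hγ : (c - 3 * d) / (c - d) < γ) :
    ∀ᵐ ω ∂P, Filter.limsup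
      (fun n : ℕ => (minDeg M n (rhat M γ n) ω : ℝ) / Real.log n) atTop
        ≤ γ * Hminusinv ((c - 3 * d) / (γ * (c - d))) := by
  have hd0 : (0 : ℝ) ≤ d := by positivity
  have hγ0 : 0 < γ := (div_pos (by linarith) (by linarith)).trans hγ
  set y := γ * Hminusinv ((c - 3 * d) / (γ * (c - d))) with hy
  have h : ∀ᵐ ω ∂P, ∀ p : ℕ, ∀ᶠ j : ℕ in atTop,
      (minDeg M j (rhat M γ j) ω : ℝ) ≤ (y + 1 / ((p : ℝ) + 1)) * Real.log j :=
    ae_all_iff.2 fun p => M.ae_eventually_minDeg_le (by omega) hc hg hγ0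
      (lt_add_of_pos_right _ Nat.one_div_pos_of_nat)
  filter_upwards [h] with ω hω
  have hlim : Tendsto (fun p : ℕ => y + 1 / ((p : ℝ) + 1)) atTop (nhds y) := by
    simpa using tendsto_one_div_add_atTop_nhds_zero_nat.const_add y
  refine ge_of_tendsto' hlim fun p => ?_
  refine limsup_le_of_le ?_ ?_
  · exact (isBoundedUnder_of ⟨0, fun n =>
      div_nonneg (Nat.cast_nonneg _) (Real.log_natCast_nonneg n)⟩ :
        IsBoundedUnder (· ≥ ·) atTop _).isCoboundedUnder_le
  · filter_upwards [hω p, eventually_ge_atTop 2] with n hn hn2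
    have h1 : (1 : ℝ) < n := by exact_mod_cast hn2
    exact (div_le_iff₀ (Real.log_pos h1)).2 hn

end RCM
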